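/- arXiv:2411.11316 — 2 statements merged into one kernel-verified Lean document; each statement's English description precedes it below -/
import Mathlib

section
/- Let P ∈ ℝ[x] be a polynomial whose coefficient of x is non-Liouville. Fix ε ∈ (0,1) and A > 0, set c = 1/(2(A+1)) and z = X^{c/log log X}. Then there exist μ ∈ (0,1) and a constant C₁ > 0 such that for all sufficiently large X, 0 ≤ S(X,z) − S(X) ≤ C₁·( X/(log z)^{1−ε} + X/(log z)^{εμ} + X/(log X)^A ). -/
open Real Finset

/-- `α` is Liouville: for every `n ∈ ℕ` there are integers `p, q` with `q > 1`
and `|α - p/q| ≤ q^(-n)`. -/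
def IsLiouvilleNumber (α : ℝ) : Prop :=
  ∀ n : ℕ, ∃ p q : ℤ, 1 < q ∧ |α - (p : ℝ) / (q : ℝ)| ≤ (q : ℝ) ^ (-(n : ℤ))

open Classical in
/-- The finset of primes `p < z`. -/
noncomputable def primesLt (z : ℝ) : Finset ℕ :=
  (Finset.range ⌈z⌉₊).filter fun p => p.Prime ∧ (p : ℝ) < z

/-- `P_z`, the product of all primes `p < z`. -/
noncomputable def Pz (z : ℝ) : ℕ := ∏ p ∈ primesLt z, p

open Classical in
/-- `S(X)`: the number of naturals `1 ≤ x ≤ X` with `gcd(x, ⌊P(x)⌋) = 1`. -/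
noncomputable def S (P : Polynomial ℝ) (X : ℝ) : ℕ :=
  ((Finset.Icc 1 ⌊X⌋₊).filter fun x => Int.gcd (x : ℤ) ⌊P.eval (x : ℝ)⌋ = 1).card

open Classical in
/-- `A_d(X)`: the set of naturals `1 ≤ x ≤ X` with `d ∣ x` and `d ∣ ⌊P(x)⌋`. -/
noncomputable def AP (P : Polynomial ℝ) (d : ℕ) (X : ℝ) : Finset ℕ :=
  (Finset.Icc 1 ⌊X⌋₊).filter fun x => (d : ℤ) ∣ (x : ℤ) ∧ (d : ℤ) ∣ ⌊P.eval (x : ℝ)⌋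

open Classical in
/-- `S(X, z)`: the number of naturals `1 ≤ x ≤ X` with `gcd(gcd(x, ⌊P(x)⌋), P_z) = 1`. -/
noncomputable def S2 (P : Polynomial ℝ) (X z : ℝ) : ℕ :=
  ((Finset.Icc 1 ⌊X⌋₊).filter fun x =>
    Nat.gcd (Int.gcd (x : ℤ) ⌊P.eval (x : ℝ)⌋) (Pz z) = 1).card

/-- `z = X ^ (c / log log X)` with `c = 1/(2(A+1))`. -/
noncomputable def zf (A X : ℝ) : ℝ := X ^ ((1 / (2 * (A + 1))) / Real.log (Real.log X))

/-! A number `x ≤ X` counted by `S(X, z)` but not by `S(X)` lies in `A_p(X)` for some prime `p ≥ z`,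
so it suffices to bound the sum of `#A_p(X)` over the primes `z ≤ p ≤ X`. Fix `D ≈ (log X)²` and a
constant `C` depending only on `P`.

If `X / p ≥ D ^ C`, then `#A_p(X) ≤ X / (p * D)`. Otherwise `P(pm) / p` would be within `1 / p` of
an integer for a proportion `1 / D` of all `m ≤ X / p`. Differencing this polynomial along popular
shifts and applying Vinogradov's lemma, with all losses powers of `D`, one approximates its
coefficients from the top one downwards, until some `q ≤ D ^ C` brings `q` times the linear
coefficient within `D ^ C / p` of an integer. The linear coefficient is that of `P`, so this
contradicts that it is non-Liouville, because `p ≥ z` exceeds every power of `log X`.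

The primes with `X / p < D ^ C` contribute at most the sum of `π(X / m)` over `m ≤ D ^ C`, which is
`O(X log log X / log X)` by Chebyshev's bound. For `z = zf A X` the quotient `log log X / log X` is
a constant multiple of `1 / log z`.
-/

section NearestInteger

lemma norm_coe_le_abs_sub_intCast (x : ℝ) (a : ℤ) : ‖(x : UnitAddCircle)‖ ≤ |x - a| :=
  UnitAddCircle.norm_eq.trans_le (round_le x a)

lemma norm_coe_natCast_mul_le (n : ℕ) (x : ℝ) :
    ‖((n * x : ℝ) : UnitAddCircle)‖ ≤ n * ‖(x : UnitAddCircle)‖ := by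
  rw [← nsmul_eq_mul, AddCircle.coe_nsmul]
  exact norm_nsmul_le

lemma norm_coe_natCast_mul_eq {n : ℕ} {x : ℝ} (h : n * ‖(x : UnitAddCircle)‖ ≤ 1 / 2) :
    ‖((n * x : ℝ) : UnitAddCircle)‖ = n * ‖(x : UnitAddCircle)‖ := by
  have coe_eq : ((n * x : ℝ) : UnitAddCircle) = ((n * (x - round x) : ℝ) : UnitAddCircle) := by
    rw [← sub_eq_zero, ← AddCircle.coe_sub]
    refine (AddCircle.coe_eq_zero_iff 1).2 ⟨n * round x, ?_⟩
    rw [zsmul_one]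
    push_cast
    ring
  have abs_eq : |n * (x - round x)| = n * ‖(x : UnitAddCircle)‖ := by
    rw [UnitAddCircle.norm_eq, abs_mul, Nat.abs_cast]
  rw [coe_eq, ← abs_eq, AddCircle.norm_coe_eq_abs_iff 1 one_ne_zero, abs_eq, abs_one]
  exact h

end NearestInteger

/-- `T` is a subset of `[1, N]` of density at least `1 / D`. The reciprocal density is kept as a
natural number since it only ever grows polynomially. -/
structure HasDensity (T : Finset ℕ) (D N : ℕ) : Prop where
  subset_Icc : T ⊆ Icc 1 N
  pos : 0 < N
  le_mul_card : N ≤ D * #T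

namespace HasDensity

variable {T : Finset ℕ} {D N : ℕ}

lemma mul_card_pos (hT : HasDensity T D N) : 0 < D * #T :=
  hT.pos.trans_le hT.le_mul_card

lemma nonempty (hT : HasDensity T D N) : T.Nonempty :=
  card_pos.1 (Nat.pos_of_mul_pos_left hT.mul_card_pos)

lemma le_of_mem (hT : HasDensity T D N) {m : ℕ} (hm : m ∈ T) : m ≤ N :=
  (mem_Icc.1 (hT.subset_Icc hm)).2

end HasDensity

section Vinogradov

lemma exists_eq_add_mul_of_lt_card {T : Finset ℕ} {N J s : ℕ} (hT : T ⊆ Icc 1 N)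
    (hcard : N + J * s < (J + 1) * #T) :
    ∃ i ∈ Icc 1 J, ∃ a ∈ T, ∃ b ∈ T, a = b + i * s := by
  have translate_mem : ∀ x ∈ T ×ˢ range (J + 1), x.1 + x.2 * s ∈ Icc 1 (N + J * s) := by
    rintro ⟨a, j⟩ hx
    rw [mem_product, mem_range_succ_iff] at hx
    have ha := mem_Icc.1 (hT hx.1)
    exact mem_Icc.2 ⟨by omega, add_le_add ha.2 (Nat.mul_le_mul_right s hx.2)⟩
  obtain ⟨⟨a, j⟩, hx, ⟨b, l⟩, hy, hne, heq⟩ :=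
    exists_ne_map_eq_of_card_lt_of_maps_to
      (by rwa [card_product, card_range, Nat.card_Icc, Nat.add_sub_cancel, mul_comm #T])
      translate_mem
  dsimp only at heq
  wlog hjl : j ≤ l generalizing a b j l
  · exact this b l hy a j hx hne.symm heq.symm (by omega)
  obtain ⟨i, rfl⟩ := Nat.exists_eq_add_of_le hjl
  rw [mem_product, mem_range_succ_iff] at hx hy
  have hab : a = b + i * s := by linarith
  have hi : i ≠ 0 := by
    rintro rfl
    simp_all
  exact ⟨i, mem_Icc.2 ⟨by omega, by omega⟩, a, hx.1, b, hy.1, hab⟩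

variable {T : Finset ℕ} {D N : ℕ} {θ ε : ℝ}

lemma HasDensity.exists_norm_mul_mul_le (hT : HasDensity T D N) {s : ℕ} (hs : 2 * D * s ≤ N)
    (hθ : ∀ m ∈ T, ‖((m * θ : ℝ) : UnitAddCircle)‖ ≤ ε) :
    ∃ i : ℕ, 0 < i ∧ i ≤ 2 * D ∧ ‖((i * (s * θ) : ℝ) : UnitAddCircle)‖ ≤ 2 * ε := by
  have hcard : N + 2 * D * s < (2 * D + 1) * #T := by
    have := hT.le_mul_card
    have := hT.nonempty.card_pos
    linarith
  obtain ⟨i, hi, a, ha, b, hb, rfl⟩ := exists_eq_add_mul_of_lt_card hT.subset_Icc hcard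
  have hdiff : (i * (s * θ) : ℝ) = ((b + i * s : ℕ) * θ : ℝ) - b * θ := by
    push_cast
    ring
  refine ⟨i, (mem_Icc.1 hi).1, (mem_Icc.1 hi).2, ?_⟩
  rw [hdiff, AddCircle.coe_sub, two_mul]
  exact (norm_sub_le _ _).trans (add_le_add (hθ _ ha) (hθ _ hb))

lemma exists_natCast_mul_mem_Ioc_two_mul {δ x : ℝ} (hδ : 0 < δ) (hδx : δ ≤ x) :
    ∃ t : ℕ, t * δ ∈ Set.Ioc x (2 * x) := by
  have hfloor : ⌊x / δ⌋₊ * δ ≤ x := (le_div_iff₀ hδ).1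
    (Nat.floor_le (div_nonneg (hδ.le.trans hδx) hδ.le))
  refine ⟨⌊x / δ⌋₊ + 1, ?_, ?_⟩
  · exact_mod_cast (div_lt_iff₀ hδ).1 (Nat.lt_floor_add_one (x / δ))
  · push_cast
    linarith

theorem HasDensity.exists_norm_mul_le (hT : HasDensity T D N) (hDN : 2 * D ≤ N)
    (hε : 16 * D * ε ≤ 1) (hθ : ∀ m ∈ T, ‖((m * θ : ℝ) : UnitAddCircle)‖ ≤ ε) :
    ∃ q : ℕ, 0 < q ∧ q ≤ 2 * D ∧ ‖((q * θ : ℝ) : UnitAddCircle)‖ ≤ 16 * D ^ 2 * ε / N := by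
  have hN : (0 : ℝ) < N := mod_cast hT.pos
  obtain ⟨q, hq0, hqD, hq⟩ := hT.exists_norm_mul_mul_le (s := 1) (by omega) hθ
  rw [Nat.cast_one, one_mul] at hq
  refine ⟨q, hq0, hqD, ?_⟩
  set δ := ‖((q * θ : ℝ) : UnitAddCircle)‖
  have hε0 : 0 ≤ ε := by linarith [norm_nonneg ((q * θ : ℝ) : UnitAddCircle)]
  by_contra! hδ
  have hδ0 : 0 < δ := by
    refine lt_of_le_of_lt ?_ hδ
    positivity
  obtain ⟨t, ht_gt, ht_le⟩ := exists_natCast_mul_mem_Ioc_two_mul hδ0 hq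
  have hstep : 2 * D * (t * q) ≤ N := by
    have : (2 * D * (t * q) : ℝ) * δ ≤ N * δ := by
      calc (2 * D * (t * q) : ℝ) * δ = 2 * D * q * (t * δ) := by ring
        _ ≤ 2 * D * (2 * D : ℕ) * (2 * (2 * ε)) := by gcongr
        _ = 16 * D ^ 2 * ε := by push_cast; ring
        _ ≤ N * δ := by rw [mul_comm (N : ℝ)]; exact ((div_lt_iff₀ hN).1 hδ).le
    exact_mod_cast le_of_mul_le_mul_right this hδ0
  obtain ⟨i, hi0, hiD, hi⟩ := hT.exists_norm_mul_mul_le hstep hθ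
  have hlarge : 2 * ε < (i * t : ℕ) * δ := by
    calc 2 * ε < t * δ := ht_gt
      _ ≤ (i * t : ℕ) * δ := by gcongr; exact Nat.le_mul_of_pos_left t hi0
  have hsmall : (i * t : ℕ) * δ ≤ 1 / 2 := by
    calc ((i * t : ℕ) : ℝ) * δ = i * (t * δ) := by push_cast; ring
      _ ≤ (2 * D : ℕ) * (2 * (2 * ε)) := by gcongr
      _ ≤ 1 / 2 := by push_cast; linarith
  have hnorm := norm_coe_natCast_mul_eq hsmall
  rw [show ((i * t : ℕ) * (q * θ) : ℝ) = i * ((t * q : ℕ) * θ) by push_cast; ring] at hnorm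
  linarith

/-- The multipliers are made equal by the pigeonhole principle, at the cost of density. -/
theorem HasDensity.exists_norm_mul_le_of_forall_exists {H : Finset ℕ} {K : ℕ}
    (hH : HasDensity H D N) (hN : 2 * (D * K) ≤ N) (hε : 16 * (D * K) * ε ≤ 1)
    (hθ : ∀ h ∈ H, ∃ q : ℕ, 0 < q ∧ q ≤ K ∧ ‖((q * (h * θ) : ℝ) : UnitAddCircle)‖ ≤ ε) :
    ∃ q : ℕ, 0 < q ∧ q ≤ 2 * (D * K) * K ∧
      ‖((q * θ : ℝ) : UnitAddCircle)‖ ≤ 16 * (D * K) ^ 2 * ε / N := by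
  choose! g hg0 hgK hg using hθ
  obtain ⟨h₀, hh₀⟩ := hH.nonempty
  have hK : 0 < K := (hg0 h₀ hh₀).trans_le (hgK h₀ hh₀)
  obtain ⟨q, hq, hcard⟩ := exists_le_card_fiber_of_nsmul_le_card_of_maps_to
    (s := H) (t := Icc 1 K) (f := g) (b := (#H / K : ℚ))
    (fun h hh ↦ mem_Icc.2 ⟨hg0 h hh, hgK h hh⟩) ⟨1, mem_Icc.2 ⟨le_rfl, hK⟩⟩
    (by rw [Nat.card_Icc, Nat.add_sub_cancel, nsmul_eq_mul, mul_div_cancel₀ _ (by positivity)])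
  have hfiber : #H ≤ K * #{h ∈ H | g h = q} := by
    rw [div_le_iff₀' (by positivity)] at hcard
    exact_mod_cast hcard
  have hdense : HasDensity {h ∈ H | g h = q} (D * K) N :=
    { subset_Icc := (filter_subset _ _).trans hH.subset_Icc
      pos := hH.pos
      le_mul_card := by
        rw [mul_assoc]
        exact hH.le_mul_card.trans (Nat.mul_le_mul_left D hfiber) }
  obtain ⟨r, hr0, hrD, hr⟩ := hdense.exists_norm_mul_le (θ := q * θ) (ε := ε) hN
    (by exact_mod_cast hε) (by
      intro h hh
      obtain ⟨hhH, rfl⟩ := mem_filter.1 hh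
      rw [mul_left_comm]
      exact hg h hhH)
  rw [mem_Icc] at hq
  refine ⟨r * q, Nat.mul_pos hr0 hq.1, Nat.mul_le_mul hrD hq.2, ?_⟩
  rw [Nat.cast_mul, mul_assoc]
  exact_mod_cast hr

end Vinogradov

section PopularShifts

/-- The elements of `T` that a shift by `h` maps into `T`. -/
def shiftOverlap (T : Finset ℕ) (h : ℕ) : Finset ℕ := {m ∈ T | m + h ∈ T}

/-- The shifts `h ≤ N` whose overlap with `T` has density at least `1 / E` in `[1, N]`. -/
def popularShifts (T : Finset ℕ) (N E : ℕ) : Finset ℕ :=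
  {h ∈ Icc 1 N | N ≤ E * #(shiftOverlap T h)}

variable {T : Finset ℕ} {D N : ℕ}

lemma card_mul_card_le_sum_card_shiftOverlap (hT : T ⊆ Icc 1 N) :
    #T * #T ≤ 2 * ∑ h ∈ Icc 1 N, #(shiftOverlap T h) + #T := by
  have offDiag_subset : T.offDiag ⊆ (Icc 1 N).biUnion fun h ↦
      (shiftOverlap T h).image (fun m ↦ (m, m + h)) ∪
        (shiftOverlap T h).image (fun m ↦ (m + h, m)) := by
    rintro ⟨a, b⟩ hab
    obtain ⟨ha, hb, hne⟩ := mem_offDiag.1 hab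
    have haN := mem_Icc.1 (hT ha)
    have hbN := mem_Icc.1 (hT hb)
    simp only [mem_biUnion, mem_union, mem_image, shiftOverlap, mem_filter, mem_Icc, Prod.mk.injEq]
    rcases hne.lt_or_gt with hlt | hlt
    · exact ⟨b - a, by omega, .inl ⟨a, ⟨ha, by rwa [Nat.add_sub_cancel' hlt.le]⟩, by omega⟩⟩
    · exact ⟨a - b, by omega, .inr ⟨b, ⟨hb, by rwa [Nat.add_sub_cancel' hlt.le]⟩, by omega⟩⟩
  have hcard : #T.offDiag ≤ 2 * ∑ h ∈ Icc 1 N, #(shiftOverlap T h) := by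
    rw [mul_sum]
    refine (card_le_card offDiag_subset).trans (card_biUnion_le.trans (sum_le_sum fun h _ ↦ ?_))
    rw [two_mul]
    exact (card_union_le _ _).trans (add_le_add card_image_le card_image_le)
  rw [offDiag_card] at hcard
  omega

theorem HasDensity.hasDensity_popularShifts (hT : HasDensity T D N) (hDN : 2 * D ≤ N) :
    HasDensity (popularShifts T N (8 * D ^ 2)) (8 * D ^ 2) N where
  subset_Icc := filter_subset _ _
  pos := hT.pos
  le_mul_card := by
    set E := 8 * D ^ 2 with hE
    set H := popularShifts T N E
    have hHsub : H ⊆ Icc 1 N := filter_subset _ _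
    have card_le : ∀ h, #(shiftOverlap T h) ≤ N := fun h ↦ by
      simpa [shiftOverlap] using card_le_card ((filter_subset (· + h ∈ T) T).trans hT.subset_Icc)
    have hterm : ∀ h ∈ Icc 1 N, E * #(shiftOverlap T h) ≤ N + if h ∈ H then E * N else 0 := by
      intro h hh
      split_ifs with hmem
      · exact (Nat.mul_le_mul_left E (card_le h)).trans (Nat.le_add_left _ _)
      · by_contra! hlt
        exact hmem (mem_filter.2 ⟨hh, by omega⟩)
    have hupper : E * ∑ h ∈ Icc 1 N, #(shiftOverlap T h) ≤ N * N + #H * (E * N) := by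
      calc E * ∑ h ∈ Icc 1 N, #(shiftOverlap T h)
          ≤ ∑ h ∈ Icc 1 N, (N + if h ∈ H then E * N else 0) := by
            rw [mul_sum]
            exact sum_le_sum hterm
        _ = N * N + #H * (E * N) := by
            rw [sum_add_distrib, ← sum_filter, sum_const, sum_const, Nat.card_Icc,
              filter_mem_eq_inter, inter_eq_right.2 hHsub]
            simp only [Nat.add_sub_cancel, smul_eq_mul]
    have htwo : 2 ≤ #T := by
      have := hT.le_mul_card
      have := Nat.pos_of_mul_pos_right hT.mul_card_pos
      nlinarith
    have hlower : #T * #T ≤ 4 * ∑ h ∈ Icc 1 N, #(shiftOverlap T h) := by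
      have := card_mul_card_le_sum_card_shiftOverlap hT.subset_Icc
      nlinarith
    have hsq : N * N ≤ D ^ 2 * (#T * #T) := by
      calc N * N ≤ (D * #T) * (D * #T) := Nat.mul_le_mul hT.le_mul_card hT.le_mul_card
        _ = D ^ 2 * (#T * #T) := by ring
    refine Nat.le_of_mul_le_mul_right (c := N) ?_ hT.pos
    nlinarith

end PopularShifts

section Polynomial

open Polynomial (monomial taylor)

variable {R : Type*} [CommRing R] {f : Polynomial R} {k : ℕ}

lemma natDegree_taylor_sub_self_le (r : R) (hf : f.natDegree ≤ k + 1) :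
    (taylor r f - f).natDegree ≤ k := by
  rw [Polynomial.natDegree_le_iff_coeff_eq_zero]
  intro n hn
  have hdeg : (Polynomial.hasseDeriv n f).natDegree < 1 := by
    have := Polynomial.natDegree_hasseDeriv_le f n
    omega
  rw [Polynomial.coeff_sub, Polynomial.taylor_coeff, Polynomial.eval_eq_sum_range' hdeg]
  simp [Polynomial.hasseDeriv_coeff]

lemma coeff_taylor_sub_self (r : R) (hf : f.natDegree ≤ k + 1) :
    (taylor r f - f).coeff k = (k + 1) * r * f.coeff (k + 1) := by
  have hdeg : (Polynomial.hasseDeriv k f).natDegree < 2 := by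
    have := Polynomial.natDegree_hasseDeriv_le f k
    omega
  rw [Polynomial.coeff_sub, Polynomial.taylor_coeff, Polynomial.eval_eq_sum_range' hdeg]
  simp only [Polynomial.hasseDeriv_coeff, sum_range_succ, range_zero, sum_empty, zero_add,
    Nat.choose_self, Nat.cast_one, one_mul, pow_zero, mul_one, add_comm 1 k,
    Nat.choose_succ_self_right, Nat.cast_add, pow_one, add_sub_cancel_left]
  ring

lemma natDegree_sub_monomial_coeff_le (hf : f.natDegree ≤ k + 1) :
    (f - monomial (k + 1) (f.coeff (k + 1))).natDegree ≤ k := by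
  rw [Polynomial.natDegree_le_iff_coeff_eq_zero]
  intro n hn
  rw [Polynomial.coeff_sub, Polynomial.coeff_monomial]
  split_ifs with h
  · rw [h, sub_self]
  · rw [Polynomial.coeff_eq_zero_of_natDegree_lt (by omega), sub_zero]

end Polynomial

section NearIntegral

open Polynomial (monomial taylor)

/-- `f` takes values within `ε` of an integer on `T`, a subset of `[1, N]` of density at least
`1 / D`. -/
structure IsNearIntegral (f : Polynomial ℝ) (D N : ℕ) (ε : ℝ) (T : Finset ℕ) : Prop
    extends HasDensity T D N where
  norm_eval_le : ∀ m ∈ T, ‖((f.eval (m : ℝ) : ℝ) : UnitAddCircle)‖ ≤ ε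

namespace IsNearIntegral

variable {f : Polynomial ℝ} {D E N n : ℕ} {ε δ : ℝ} {T : Finset ℕ}

lemma nonneg (hf : IsNearIntegral f D N ε T) : 0 ≤ ε :=
  let ⟨m, hm⟩ := hf.nonempty
  (norm_nonneg _).trans (hf.norm_eval_le m hm)

lemma mono (hf : IsNearIntegral f D N ε T) (h : ε ≤ δ) : IsNearIntegral f D N δ T :=
  { hf with norm_eval_le := fun m hm ↦ (hf.norm_eval_le m hm).trans h }

lemma taylor_sub_self (hf : IsNearIntegral f D N ε T) {h : ℕ} (hh : h ∈ popularShifts T N E) :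
    IsNearIntegral (taylor (h : ℝ) f - f) E N (2 * ε) (shiftOverlap T h) where
  subset_Icc := (filter_subset _ _).trans hf.subset_Icc
  pos := hf.pos
  le_mul_card := (mem_filter.1 hh).2
  norm_eval_le m hm := by
    obtain ⟨hmT, hmhT⟩ := mem_filter.1 hm
    rw [Polynomial.eval_sub, Polynomial.taylor_eval, ← Nat.cast_add, AddCircle.coe_sub, two_mul]
    exact (norm_sub_le _ _).trans (add_le_add (hf.norm_eval_le _ hmhT) (hf.norm_eval_le _ hmT))

lemma mul_sub_monomial (hf : IsNearIntegral f D N ε T) {q : ℕ} {b : ℝ}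
    (hb : ‖((q * b : ℝ) : UnitAddCircle)‖ ≤ δ / N ^ n) :
    IsNearIntegral (Polynomial.C (q : ℝ) * (f - monomial n b)) D N (q * ε + δ) T where
  __ := hf.toHasDensity
  norm_eval_le m hm := by
    have hN : (0 : ℝ) < N := mod_cast hf.pos
    have hvalue : ‖((q * f.eval (m : ℝ) : ℝ) : UnitAddCircle)‖ ≤ q * ε :=
      (norm_coe_natCast_mul_le q _).trans (by gcongr; exact hf.norm_eval_le m hm)
    have hmonomial : ‖(((m ^ n : ℕ) * (q * b) : ℝ) : UnitAddCircle)‖ ≤ δ := by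
      calc ‖(((m ^ n : ℕ) * (q * b) : ℝ) : UnitAddCircle)‖
          ≤ (m ^ n : ℕ) * ‖((q * b : ℝ) : UnitAddCircle)‖ := norm_coe_natCast_mul_le _ _
        _ ≤ (N ^ n : ℕ) * (δ / N ^ n) := by gcongr; exact hf.le_of_mem hm
        _ = δ := by rw [Nat.cast_pow]; field_simp
    have heval : (Polynomial.C (q : ℝ) * (f - monomial n b)).eval (m : ℝ) =
        q * f.eval (m : ℝ) - (m ^ n : ℕ) * (q * b) := by
      simp only [Polynomial.eval_mul, Polynomial.eval_C, Polynomial.eval_sub,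
        Polynomial.eval_monomial, Nat.cast_pow]
      ring
    rw [heval, AddCircle.coe_sub]
    exact (norm_sub_le _ _).trans (add_le_add hvalue hmonomial)

end IsNearIntegral

/-- Every polynomial `f` of degree at most `k` with near-integral values on a set of density `1 / D`
has a `j`-th coefficient with a rational approximation of denominator at most `K` that is as sharp,
up to the factor `K`, as if `f` were near-integral at all `m ≤ N`. -/
def CoeffApprox (k j D K : ℕ) : Prop :=
  ∀ ⦃f : Polynomial ℝ⦄, f.natDegree ≤ k → ∀ ⦃N : ℕ⦄, K ≤ N → ∀ ⦃ε : ℝ⦄, ε * K ≤ 1 →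
    ∀ ⦃T : Finset ℕ⦄, IsNearIntegral f D N ε T →
      ∃ q : ℕ, 0 < q ∧ q ≤ K ∧ ‖((q * f.coeff j : ℝ) : UnitAddCircle)‖ ≤ ε * K / N ^ j

namespace CoeffApprox

variable {k j D K L : ℕ}

lemma mono (h : CoeffApprox k j D K) (hKL : K ≤ L) : CoeffApprox k j D L := by
  intro f hf N hN ε hε T hT
  have hle : ε * K ≤ ε * L := mul_le_mul_of_nonneg_left (mod_cast hKL) hT.nonneg
  obtain ⟨q, hq0, hqK, hq⟩ := h hf (hKL.trans hN) (hle.trans hε) hT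
  exact ⟨q, hq0, hqK.trans hKL, hq.trans (by gcongr)⟩

lemma zero (D : ℕ) : CoeffApprox 0 0 D 1 := by
  intro f hf N _ ε _ T hT
  obtain ⟨m, hm⟩ := hT.nonempty
  refine ⟨1, one_pos, le_rfl, ?_⟩
  have heval := hT.norm_eval_le m hm
  rw [Polynomial.eq_C_of_natDegree_le_zero hf, Polynomial.eval_C] at heval
  simpa using heval

lemma exists_norm_mul_popularShift_le {f : Polynomial ℝ} {E N : ℕ} {ε : ℝ} {T : Finset ℕ}
    (h : CoeffApprox k k E K) (hf : f.natDegree ≤ k + 1) (hN : K ≤ N) (hε : 2 * ε * K ≤ 1)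
    (hT : IsNearIntegral f D N ε T) {s : ℕ} (hs : s ∈ popularShifts T N E) :
    ∃ q : ℕ, 0 < q ∧ q ≤ K ∧
      ‖((q * (s * ((k + 1) * f.coeff (k + 1))) : ℝ) : UnitAddCircle)‖ ≤ 2 * ε * K / N ^ k := by
  obtain ⟨q, hq0, hqK, hq⟩ := h (natDegree_taylor_sub_self_le (s : ℝ) hf) hN hε
    (hT.taylor_sub_self hs)
  rw [coeff_taylor_sub_self _ hf, mul_comm ((k : ℝ) + 1), mul_assoc] at hq
  exact ⟨q, hq0, hqK, hq⟩

/-- Differencing: for a popular shift `h`, the leading coefficient of `f(x + h) - f(x)` is `h` times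
`(k + 1) * f.coeff (k + 1)`, to which Vinogradov's lemma applies as `h` varies. -/
lemma exists_norm_mul_succ_mul_coeff_le {f : Polynomial ℝ} {N : ℕ} {ε : ℝ} {T : Finset ℕ}
    (h : CoeffApprox k k (8 * D ^ 2) K) (hK : 0 < K) (hf : f.natDegree ≤ k + 1)
    (hN : 2 * (8 * D ^ 2 * K * K) ≤ N) (hε : 32 * (ε * (8 * D ^ 2 * K * K)) ≤ 1)
    (hT : IsNearIntegral f D N ε T) :
    ∃ q : ℕ, 0 < q ∧ q ≤ 2 * (8 * D ^ 2 * K) * K ∧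
      ‖((q * ((k + 1) * f.coeff (k + 1)) : ℝ) : UnitAddCircle)‖ ≤
        ε * (32 * (8 * D ^ 2 * K) ^ 2 * K) / N ^ (k + 1) := by
  have hε0 := hT.nonneg
  have hD : 0 < D := Nat.pos_of_mul_pos_right hT.mul_card_pos
  have hN1 : (1 : ℝ) ≤ N := mod_cast hT.pos
  have hD_le : D ≤ 8 * D ^ 2 * K * K :=
    (Nat.le_mul_of_pos_right D (by positivity)).trans_eq (by ring : D * (8 * D * K * K) = _)
  have hdense := hT.hasDensity_popularShifts (by omega)
  set E := 8 * D ^ 2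
  have hE : (8 * D ^ 2 : ℝ) = E := by simp [E]
  rw [hE] at hε ⊢
  have hK_le : K ≤ E * K * K := Nat.le_mul_of_pos_left _ (by positivity)
  have hεK : 2 * ε * K ≤ 1 := by
    have : ε * K ≤ ε * (E * K * K) := mul_le_mul_of_nonneg_left (mod_cast hK_le) hε0
    nlinarith
  have hεN : 16 * (E * K) * (2 * ε * K / N ^ k) ≤ 1 := by
    calc 16 * (E * K) * (2 * ε * K / N ^ k) = 32 * (ε * (E * K * K)) / N ^ k := by ring
      _ ≤ 1 := div_le_one_of_le₀ (hε.trans (one_le_pow₀ hN1)) (by positivity)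
  have hEK_le : E * K ≤ E * K * K := Nat.le_mul_of_pos_right _ hK
  obtain ⟨q, hq0, hqK, hq⟩ := hdense.exists_norm_mul_le_of_forall_exists (by linarith) hεN
    fun s hs ↦ h.exists_norm_mul_popularShift_le hf (by linarith) hεK hT hs
  refine ⟨q, hq0, hqK, hq.trans_eq ?_⟩
  field_simp
  ring

lemma succ_top (h : CoeffApprox k k (8 * D ^ 2) K) (hK : 0 < K) :
    CoeffApprox (k + 1) (k + 1) D (32 * (8 * D ^ 2 * K) ^ 2 * K * (k + 1)) := by
  intro f hf N hN ε hε T hT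
  have hε0 := hT.nonneg
  have hD : 0 < D := Nat.pos_of_mul_pos_right hT.mul_card_pos
  have hM : 32 * (8 * D ^ 2 * K * K) ≤ 32 * (8 * D ^ 2 * K) ^ 2 * K * (k + 1) := by
    calc 32 * (8 * D ^ 2 * K * K) ≤ 32 * (8 * D ^ 2 * K * K) * (8 * D ^ 2 * K * (k + 1)) :=
          Nat.le_mul_of_pos_right _ (by positivity)
      _ = 32 * (8 * D ^ 2 * K) ^ 2 * K * (k + 1) := by ring
  have hMε : 32 * (ε * (8 * D ^ 2 * K * K)) ≤ 1 := by
    calc 32 * (ε * (8 * D ^ 2 * K * K)) = ε * (32 * (8 * D ^ 2 * K * K) : ℕ) := by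
          push_cast; ring
      _ ≤ 1 := (mul_le_mul_of_nonneg_left (mod_cast hM) hε0).trans hε
  obtain ⟨q, hq0, hqK, hq⟩ := h.exists_norm_mul_succ_mul_coeff_le hK hf (by omega) hMε hT
  refine ⟨q * (k + 1), by positivity, ?_, ?_⟩
  · calc q * (k + 1) ≤ 2 * (8 * D ^ 2 * K) * K * (k + 1) := by gcongr
      _ ≤ 32 * (8 * D ^ 2 * K) ^ 2 * K * (k + 1) := by
        gcongr
        exacts [by norm_num, Nat.le_self_pow two_ne_zero _]
  · rw [Nat.cast_mul, mul_assoc, Nat.cast_succ]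
    refine hq.trans ?_
    push_cast
    gcongr ε * ?_ / _
    exact le_mul_of_one_le_right (by positivity) (by linarith [k.cast_nonneg (α := ℝ)])

lemma succ_of_le (htop : CoeffApprox (k + 1) (k + 1) D L) (h : CoeffApprox k j D K) (hL : 0 < L)
    (hK : 0 < K) (hjk : j ≤ k) : CoeffApprox (k + 1) j D (2 * L * K) := by
  intro f hf N hN ε hε T hT
  push_cast at hε ⊢
  have hε0 := hT.nonneg
  have hL_le : L ≤ 2 * L * K := by nlinarith
  have hεL : ε * L ≤ ε * (2 * L * K) := mul_le_mul_of_nonneg_left (mod_cast hL_le) hε0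
  obtain ⟨q, hq0, hqL, hq⟩ := htop hf (hL_le.trans hN) (hεL.trans hε) hT
  set g := Polynomial.C (q : ℝ) * (f - monomial (k + 1) (f.coeff (k + 1)))
  have hg : g.natDegree ≤ k :=
    (Polynomial.natDegree_C_mul_le _ _).trans (natDegree_sub_monomial_coeff_le hf)
  have hgT : IsNearIntegral g D N (2 * ε * L) T := (hT.mul_sub_monomial hq).mono (by
    have : (q : ℝ) ≤ L := mod_cast hqL
    nlinarith)
  obtain ⟨r, hr0, hrK, hr⟩ := h hg (by nlinarith) (by linarith) hgT
  have hcoeff : g.coeff j = q * f.coeff j := by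
    rw [Polynomial.coeff_C_mul, Polynomial.coeff_sub, Polynomial.coeff_monomial,
      if_neg (by omega), sub_zero]
  rw [hcoeff] at hr
  refine ⟨r * q, Nat.mul_pos hr0 hq0, by nlinarith, ?_⟩
  rw [Nat.cast_mul, mul_assoc, show ε * (2 * L * K) = 2 * ε * L * K by ring]
  exact hr

theorem exists_top (k : ℕ) : ∃ C : ℕ, ∀ D : ℕ, 2 ≤ D → CoeffApprox k k D (D ^ C) := by
  induction k with
  | zero => exact ⟨0, fun D _ ↦ zero D⟩
  | succ k ih =>
    obtain ⟨C, hC⟩ := ih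
    refine ⟨15 * C + k + 16, fun D hD ↦ ?_⟩
    refine (succ_top (hC (8 * D ^ 2) (by nlinarith)) (by positivity)).mono ?_
    have two_pow_mul_le : ∀ a b : ℕ, 2 ^ a * D ^ b ≤ D ^ (a + b) := fun a b ↦ by
      rw [pow_add]
      gcongr
    have hE : 8 * D ^ 2 ≤ D ^ 5 := two_pow_mul_le 3 2
    have hk : k + 1 ≤ D ^ (k + 1) := (Nat.lt_pow_self (by omega)).le
    calc 32 * (8 * D ^ 2 * (8 * D ^ 2) ^ C) ^ 2 * (8 * D ^ 2) ^ C * (k + 1)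
        ≤ 2 ^ 5 * (D ^ 5 * (D ^ 5) ^ C) ^ 2 * (D ^ 5) ^ C * D ^ (k + 1) := by gcongr; norm_num
      _ = 2 ^ 5 * D ^ (15 * C + k + 11) := by ring
      _ ≤ D ^ (15 * C + k + 16) := (two_pow_mul_le _ _).trans_eq (by ring)

theorem exists_of_le {j k : ℕ} (hjk : j ≤ k) :
    ∃ C : ℕ, ∀ D : ℕ, 2 ≤ D → CoeffApprox k j D (D ^ C) := by
  induction k, hjk using Nat.le_induction with
  | base => exact exists_top j
  | succ k hjk ih =>
    obtain ⟨C, hC⟩ := ih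
    obtain ⟨B, hB⟩ := exists_top (k + 1)
    refine ⟨1 + B + C, fun D hD ↦ ?_⟩
    refine (succ_of_le (hB D hD) (hC D hD) (by positivity) (by positivity) hjk).mono ?_
    rw [pow_add, pow_add, pow_one]
    gcongr

end CoeffApprox

end NearIntegral

section Divisibility

lemma exists_forall_inv_pow_lt_norm_mul {α : ℝ} (hα : ¬ IsLiouvilleNumber α) :
    ∃ n : ℕ, ∀ q : ℕ, 0 < q → ((2 * q : ℝ) ^ n)⁻¹ < ‖((q * α : ℝ) : UnitAddCircle)‖ := by
  simp only [IsLiouvilleNumber, not_forall, not_exists, not_and, not_le] at hα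
  obtain ⟨n, hn⟩ := hα
  refine ⟨n, fun q hq ↦ ?_⟩
  have hq1 : (1 : ℝ) ≤ q := mod_cast hq
  -- Doubling numerator and denominator makes the denominator exceed `1` even when `q = 1`.
  have hlt := hn (2 * round (q * α)) (2 * q) (by omega)
  have heq : α - ((2 * round (q * α) : ℤ) : ℝ) / ((2 * q : ℤ) : ℝ) =
      (q * α - round (q * α)) / q := by
    push_cast
    field_simp
  rw [heq, abs_div, Nat.abs_cast, zpow_neg, zpow_natCast] at hlt
  push_cast at hlt
  rw [UnitAddCircle.norm_eq]
  exact hlt.trans_le (div_le_self (abs_nonneg _) hq1)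

lemma norm_coe_div_le_of_dvd_floor {p : ℕ} {y : ℝ} (h : (p : ℤ) ∣ ⌊y⌋) :
    ‖((y / p : ℝ) : UnitAddCircle)‖ ≤ 1 / p := by
  obtain rfl | hp := p.eq_zero_or_pos
  · simp
  obtain ⟨c, hc⟩ := h
  refine (norm_coe_le_abs_sub_intCast _ c).trans ?_
  have hfract : y / p - c = Int.fract y / p := by
    rw [Int.fract, hc]
    push_cast
    field_simp
  rw [hfract, abs_div, Nat.abs_cast, Int.abs_fract]
  gcongr
  exact (Int.fract_lt_one y).le

/-- The polynomial `P(px) / p`. It has the same linear coefficient as `P`, and at `m` it is close to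
an integer when `p` divides `⌊P(pm)⌋`. -/
noncomputable def rescale (P : Polynomial ℝ) (p : ℕ) : Polynomial ℝ :=
  Polynomial.C (p : ℝ)⁻¹ * P.comp (Polynomial.C (p : ℝ) * Polynomial.X)

lemma natDegree_rescale_le (P : Polynomial ℝ) (p : ℕ) : (rescale P p).natDegree ≤ P.natDegree :=
  calc (rescale P p).natDegree
      ≤ (P.comp (Polynomial.C (p : ℝ) * Polynomial.X)).natDegree :=
        Polynomial.natDegree_C_mul_le _ _
    _ ≤ P.natDegree * 1 := Polynomial.natDegree_comp_le.trans
        (Nat.mul_le_mul_left _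
          ((Polynomial.natDegree_C_mul_le _ _).trans Polynomial.natDegree_X_le))
    _ = P.natDegree := mul_one _

lemma coeff_one_rescale (P : Polynomial ℝ) {p : ℕ} (hp : p ≠ 0) :
    (rescale P p).coeff 1 = P.coeff 1 := by
  rw [rescale, Polynomial.coeff_C_mul, Polynomial.comp_C_mul_X_coeff]
  field_simp

lemma eval_natCast_rescale (P : Polynomial ℝ) (p m : ℕ) :
    (rescale P p).eval (m : ℝ) = P.eval ((p * m : ℕ) : ℝ) / p := by
  simp only [rescale, Polynomial.eval_mul, Polynomial.eval_C, Polynomial.eval_comp,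
    Polynomial.eval_X, Nat.cast_mul, div_eq_inv_mul]

theorem exists_mul_card_filter_dvd_floor_eval_lt (P : Polynomial ℝ)
    (hP : ¬ IsLiouvilleNumber (P.coeff 1)) :
    ∃ C : ℕ, ∀ D N p : ℕ, 2 ≤ D → D ^ C ≤ N → D ^ C ≤ p →
      D * #{m ∈ Icc 1 N | (p : ℤ) ∣ ⌊P.eval ((p * m : ℕ) : ℝ)⌋} < N := by
  obtain ⟨B, hB⟩ := CoeffApprox.exists_of_le (Nat.le_add_left 1 P.natDegree)
  obtain ⟨n, hn⟩ := exists_forall_inv_pow_lt_norm_mul hP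
  refine ⟨B + (1 + B) * n, fun D N p hD hN hp ↦ ?_⟩
  by_contra! hcard
  have hD1 : 1 ≤ D := by omega
  have hBC : D ^ B ≤ D ^ (B + (1 + B) * n) := Nat.pow_le_pow_right hD1 (Nat.le_add_right _ _)
  have hN0 : 0 < N := (Nat.pow_pos hD1).trans_le hN
  have hp0 : 0 < p := (Nat.pow_pos hD1).trans_le hp
  have hnear : IsNearIntegral (rescale P p) D N (1 / p)
      {m ∈ Icc 1 N | (p : ℤ) ∣ ⌊P.eval ((p * m : ℕ) : ℝ)⌋} :=
    { subset_Icc := filter_subset _ _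
      pos := hN0
      le_mul_card := hcard
      norm_eval_le := fun m hm ↦ by
        rw [eval_natCast_rescale]
        exact norm_coe_div_le_of_dvd_floor (mem_filter.1 hm).2 }
  have hε : 1 / (p : ℝ) * (D ^ B : ℕ) ≤ 1 := by
    rw [one_div_mul_eq_div, div_le_one (by positivity)]
    exact_mod_cast hBC.trans hp
  obtain ⟨q, hq0, hqB, hq⟩ :=
    hB D hD ((natDegree_rescale_le P p).trans (Nat.le_succ _)) (hBC.trans hN) hε hnear
  rw [coeff_one_rescale P hp0.ne'] at hq
  have hlt : ((2 * q : ℝ) ^ n)⁻¹ < (D ^ B : ℕ) / p := by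
    calc _ < 1 / (p : ℝ) * (D ^ B : ℕ) / N ^ 1 := (hn q hq0).trans_le hq
      _ = ((D ^ B : ℕ) : ℝ) / p / N := by ring
      _ ≤ (D ^ B : ℕ) / p := div_le_self (by positivity) (mod_cast hN0)
  have hp_lt : p < D ^ B * (2 * q) ^ n := by
    rw [inv_lt_iff_one_lt_mul₀ (by positivity), div_mul_eq_mul_div,
      one_lt_div (by positivity)] at hlt
    exact_mod_cast hlt
  have hle : D ^ B * (2 * q) ^ n ≤ D ^ (B + (1 + B) * n) := by
    rw [pow_add, pow_mul, pow_add, pow_one]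
    gcongr
  omega

lemma AP_eq_image {p : ℕ} (hp : 0 < p) (P : Polynomial ℝ) (X : ℝ) :
    AP P p X = {m ∈ Icc 1 (⌊X⌋₊ / p) | (p : ℤ) ∣ ⌊P.eval ((p * m : ℕ) : ℝ)⌋}.image (p * ·) := by
  ext x
  simp only [AP, mem_filter, mem_image, mem_Icc, Int.natCast_dvd_natCast]
  constructor
  · rintro ⟨⟨hx1, hxX⟩, ⟨m, rfl⟩, hm⟩
    rw [mul_comm, ← Nat.le_div_iff_mul_le hp] at hxX
    exact ⟨m, ⟨⟨Nat.pos_of_mul_pos_left hx1, hxX⟩, hm⟩, rfl⟩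
  · rintro ⟨m, ⟨⟨hm1, hmX⟩, hm⟩, rfl⟩
    rw [Nat.le_div_iff_mul_le hp, mul_comm] at hmX
    exact ⟨⟨Nat.mul_pos hp hm1, hmX⟩, dvd_mul_right p m, hm⟩

lemma card_AP_le {p : ℕ} (hp : 0 < p) (P : Polynomial ℝ) (X : ℝ) :
    #(AP P p X) ≤ ⌊X⌋₊ / p := by
  rw [AP_eq_image hp]
  simpa using card_image_le.trans (card_filter_le (Icc 1 (⌊X⌋₊ / p)) _)

theorem exists_mul_card_AP_lt (P : Polynomial ℝ) (hP : ¬ IsLiouvilleNumber (P.coeff 1)) :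
    ∃ C : ℕ, ∀ (D p : ℕ) (X : ℝ), 2 ≤ D → D ^ C ≤ p → D ^ C ≤ ⌊X⌋₊ / p →
      D * #(AP P p X) < ⌊X⌋₊ / p := by
  obtain ⟨C, hC⟩ := exists_mul_card_filter_dvd_floor_eval_lt P hP
  refine ⟨C, fun D p X hD hp hX ↦ ?_⟩
  have hp0 : 0 < p := (Nat.pow_pos (by omega)).trans_le hp
  rw [AP_eq_image hp0]
  exact (Nat.mul_le_mul_left D card_image_le).trans_lt (hC D _ p hD hX hp)

end Divisibility

section Sifting

-- In the definitions of `S` and `S2` the set being filtered is the image of `Icc 1 ⌊X⌋₊` in `ℤ`,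
-- as the elaborator coerces the finset along its monad structure.
lemma card_filter_intCast {s : Finset ℕ} {t : Finset ℤ} (p : ℤ → Prop) [DecidablePred p]
    (ht : ∀ y, y ∈ t ↔ ∃ x ∈ s, (x : ℤ) = y) : #{y ∈ t | p y} = #{x ∈ s | p (x : ℕ)} := by
  rw [← card_image_of_injective {x ∈ s | p (x : ℕ)} (Nat.cast_injective (R := ℤ))]
  congr 1
  ext y
  simp only [mem_filter, mem_image, ht]
  constructor
  · rintro ⟨⟨x, hx, rfl⟩, hp⟩
    exact ⟨x, ⟨hx, hp⟩, rfl⟩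
  · rintro ⟨x, ⟨hx, hp⟩, rfl⟩
    exact ⟨⟨x, hx, rfl⟩, hp⟩

variable (P : Polynomial ℝ) (X z : ℝ)

lemma S_eq_card : S P X = #{x ∈ Icc 1 ⌊X⌋₊ | Int.gcd (x : ℕ) ⌊P.eval (x : ℝ)⌋ = 1} := by
  unfold S
  rw [card_filter_intCast (s := Icc 1 ⌊X⌋₊) _ fun y ↦ by simp [eq_comm]]
  simp only [Int.cast_natCast]

lemma S2_eq_card :
    S2 P X z =
      #{x ∈ Icc 1 ⌊X⌋₊ | Nat.gcd (Int.gcd (x : ℕ) ⌊P.eval (x : ℝ)⌋) (Pz z) = 1} := by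
  unfold S2
  rw [card_filter_intCast (s := Icc 1 ⌊X⌋₊) _ fun y ↦ by simp [eq_comm]]
  simp only [Int.cast_natCast]

lemma S_le_S2 : S P X ≤ S2 P X z := by
  rw [S_eq_card, S2_eq_card]
  refine card_le_card (monotone_filter_right _ fun x _ hx ↦ ?_)
  rw [hx, Nat.gcd_one_left]

/-- The primes `p` with `z ≤ p ≤ X`. -/
noncomputable def primesIcc (z X : ℝ) : Finset ℕ :=
  {p ∈ Icc 1 ⌊X⌋₊ | p.Prime ∧ z ≤ p}

variable {z} in
lemma le_of_prime_of_dvd_of_gcd_Pz_eq_one {g p : ℕ} (hp : p.Prime) (hpg : p ∣ g)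
    (hg : Nat.gcd g (Pz z) = 1) : z ≤ p := by
  by_contra! hpz
  have hpPz : p ∣ Pz z :=
    dvd_prod_of_mem _ (mem_filter.2 ⟨mem_range.2 (Nat.lt_ceil.2 hpz), hp, hpz⟩)
  exact hp.one_lt.not_ge (Nat.le_of_dvd one_pos (hg ▸ Nat.dvd_gcd hpg hpPz))

theorem S2_le_S_add_sum_card_AP :
    S2 P X z ≤ S P X + ∑ p ∈ primesIcc z X, #(AP P p X) := by
  rw [S_eq_card, S2_eq_card]
  refine (card_le_card ?_).trans ((card_union_le _ _).trans
    (Nat.add_le_add_left (card_biUnion_le (s := primesIcc z X) (t := fun p ↦ AP P p X)) _))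
  intro x hx
  obtain ⟨hxX, hxz⟩ := mem_filter.1 hx
  rw [mem_union]
  refine or_iff_not_imp_left.2 fun hxS ↦ ?_
  set g := Int.gcd (x : ℤ) ⌊P.eval (x : ℝ)⌋
  have hp : g.minFac.Prime := Nat.minFac_prime fun hg ↦ hxS (mem_filter.2 ⟨hxX, hg⟩)
  have hpx : g.minFac ∣ x := Int.natCast_dvd_natCast.1
    ((Int.natCast_dvd_natCast.2 g.minFac_dvd).trans (Int.gcd_dvd_left _ _))
  have hpP : (g.minFac : ℤ) ∣ ⌊P.eval (x : ℝ)⌋ :=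
    (Int.natCast_dvd_natCast.2 g.minFac_dvd).trans (Int.gcd_dvd_right _ _)
  have hxX' := mem_Icc.1 hxX
  refine mem_biUnion.2 ⟨g.minFac, mem_filter.2 ⟨mem_Icc.2 ⟨hp.one_le, ?_⟩, hp, ?_⟩,
    mem_filter.2 ⟨hxX, Int.natCast_dvd_natCast.2 hpx, hpP⟩⟩
  · exact (Nat.le_of_dvd hxX'.1 hpx).trans hxX'.2
  · exact le_of_prime_of_dvd_of_gcd_Pz_eq_one hp g.minFac_dvd hxz

end Sifting

section PrimeSums

variable {X : ℝ}

lemma sum_Icc_inv_le_one_add_log (n : ℕ) : ∑ i ∈ Icc 1 n, (i : ℝ)⁻¹ ≤ 1 + log n := by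
  have h := harmonic_le_one_add_log n
  rw [harmonic_eq_sum_Icc] at h
  push_cast at h
  exact h

lemma primeCounting_floor_le_five_mul_div_log (hX : 1 < X) :
    (Nat.primeCounting ⌊X⌋₊ : ℝ) ≤ 5 * X / log X := by
  have hlog : 0 < log X := log_pos hX
  have hX0 : 0 ≤ X := by linarith
  have hlog4 : log 4 ≤ 3 / 2 := by
    rw [show (4 : ℝ) = 2 ^ 2 by norm_num, log_pow]
    linarith [log_two_lt_d9]
  have hsqrt : √X ≤ 2 * X / log X := by
    rw [le_div_iff₀ hlog]
    have := log_le_sub_one_of_pos (sqrt_pos.2 (zero_lt_one.trans hX))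
    rw [log_sqrt hX0] at this
    nlinarith [sq_sqrt hX0, sqrt_nonneg X]
  calc (Nat.primeCounting ⌊X⌋₊ : ℝ) ≤ log 4 * X / log √X + √X :=
        Chebyshev.pi_le_log4_mul_div hX
    _ ≤ 3 / 2 * X / (log X / 2) + 2 * X / log X := by
        rw [log_sqrt hX0]
        gcongr
    _ = 5 * X / log X := by field_simp; norm_num

lemma sum_div_le_sum_primeCounting_div {Q : Finset ℕ} {N K : ℕ}
    (hQ : ∀ p ∈ Q, p.Prime ∧ N / p ≤ K) :
    ∑ p ∈ Q, N / p ≤ ∑ m ∈ Icc 1 K, Nat.primeCounting (N / m) := by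
  have hdiv : ∀ p ∈ Q, N / p = #{m ∈ Icc 1 K | p * m ≤ N} := by
    intro p hp
    obtain ⟨hprime, hK⟩ := hQ p hp
    have hfilter : {m ∈ Icc 1 K | p * m ≤ N} = Icc 1 (N / p) := by
      ext m
      rw [mem_filter, mem_Icc, mem_Icc, mul_comm, ← Nat.le_div_iff_mul_le hprime.pos]
      omega
    rw [hfilter, Nat.card_Icc, Nat.add_sub_cancel]
  have hcount : ∀ m ∈ Icc 1 K, #{p ∈ Q | p * m ≤ N} ≤ Nat.primeCounting (N / m) := by
    intro m hm
    rw [← Nat.primesLE_card_eq_primeCounting]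
    refine card_le_card fun p hp ↦ ?_
    rw [mem_filter, ← Nat.le_div_iff_mul_le (mem_Icc.1 hm).1] at hp
    exact Nat.mem_primesLE.2 ⟨hp.2, (hQ p hp.1).1⟩
  calc ∑ p ∈ Q, N / p = ∑ p ∈ Q, #{m ∈ Icc 1 K | p * m ≤ N} := sum_congr rfl hdiv
    _ = ∑ m ∈ Icc 1 K, #{p ∈ Q | p * m ≤ N} :=
        sum_card_bipartiteAbove_eq_sum_card_bipartiteBelow _
    _ ≤ ∑ m ∈ Icc 1 K, Nat.primeCounting (N / m) := sum_le_sum hcount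

lemma sum_primeCounting_floor_div_le {K : ℕ} (hX : 1 < X) (hK : (K : ℝ) ^ 2 ≤ X) :
    (∑ m ∈ Icc 1 K, Nat.primeCounting (⌊X⌋₊ / m) : ℝ) ≤ 10 * X / log X * (1 + log K) := by
  have hlog : 0 < log X := log_pos hX
  have hterm : ∀ m ∈ Icc 1 K, (Nat.primeCounting (⌊X⌋₊ / m) : ℝ) ≤ 10 * X / log X * (m : ℝ)⁻¹ := by
    intro m hm
    have hm1 : (1 : ℝ) ≤ m := mod_cast (mem_Icc.1 hm).1
    have hm2 : (m : ℝ) ^ 2 ≤ X := hK.trans' (by gcongr; exact (mem_Icc.1 hm).2)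
    have hsqrt : √X ≤ X / m := by
      rw [le_div_iff₀ (by linarith)]
      nlinarith [le_sqrt_of_sq_le hm2, sq_sqrt (by linarith : 0 ≤ X), sqrt_nonneg X]
    have hlt : 1 < X / m := (lt_sqrt_of_sq_lt (by simpa using hX)).trans_le hsqrt
    have hlog_le : log X / 2 ≤ log (X / m) := by
      rw [← log_sqrt (by linarith)]
      exact log_le_log (sqrt_pos.2 (by linarith)) hsqrt
    rw [← Nat.floor_div_natCast]
    calc (Nat.primeCounting ⌊X / m⌋₊ : ℝ) ≤ 5 * (X / m) / log (X / m) :=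
          primeCounting_floor_le_five_mul_div_log hlt
      _ ≤ 5 * (X / m) / (log X / 2) := by gcongr
      _ = 10 * X / log X * (m : ℝ)⁻¹ := by field_simp; norm_num
  calc (∑ m ∈ Icc 1 K, Nat.primeCounting (⌊X⌋₊ / m) : ℝ)
      ≤ ∑ m ∈ Icc 1 K, 10 * X / log X * (m : ℝ)⁻¹ := sum_le_sum hterm
    _ ≤ 10 * X / log X * (1 + log K) := by
        rw [← mul_sum]
        gcongr
        exact sum_Icc_inv_le_one_add_log K

end PrimeSums

section Bound

variable {P : Polynomial ℝ} {X z : ℝ} {D K : ℕ}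

lemma sum_card_AP_small_le (hX : 1 ≤ X) (hD : 0 < D) {Q : Finset ℕ} (hQ : Q ⊆ Icc 1 ⌊X⌋₊)
    (hAP : ∀ p ∈ Q, D * #(AP P p X) ≤ ⌊X⌋₊ / p) :
    (∑ p ∈ Q, #(AP P p X) : ℝ) ≤ X * (1 + log X) / D := by
  have hterm : ∀ p ∈ Q, (#(AP P p X) : ℝ) ≤ X / D * (p : ℝ)⁻¹ := by
    intro p hp
    have hDAP : (D : ℝ) * #(AP P p X) ≤ X / p :=
      calc (D : ℝ) * #(AP P p X) ≤ (⌊X⌋₊ / p : ℕ) := mod_cast hAP p hp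
        _ ≤ (⌊X⌋₊ : ℝ) / p := Nat.cast_div_le
        _ ≤ X / p := by gcongr; exact Nat.floor_le (by linarith)
    calc (#(AP P p X) : ℝ) ≤ X / p / D := by rwa [le_div_iff₀' (by positivity)]
      _ = X / D * (p : ℝ)⁻¹ := by ring
  calc (∑ p ∈ Q, #(AP P p X) : ℝ) ≤ ∑ p ∈ Q, X / D * (p : ℝ)⁻¹ := sum_le_sum hterm
    _ ≤ ∑ p ∈ Icc 1 ⌊X⌋₊, X / D * (p : ℝ)⁻¹ :=
        sum_le_sum_of_subset_of_nonneg hQ fun p _ _ ↦ by positivity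
    _ ≤ X / D * (1 + log ⌊X⌋₊) := by
        rw [← mul_sum]
        gcongr
        exact sum_Icc_inv_le_one_add_log _
    _ ≤ X / D * (1 + log X) := by
        gcongr
        · exact mod_cast Nat.floor_pos.2 hX
        · exact Nat.floor_le (by linarith)
    _ = X * (1 + log X) / D := by ring

theorem S2_sub_S_le (hX : 1 < X) (hD : 0 < D) (hK : (K : ℝ) ^ 2 ≤ X) (hKz : K ≤ z)
    (hAP : ∀ p, K ≤ p → K ≤ ⌊X⌋₊ / p → D * #(AP P p X) ≤ ⌊X⌋₊ / p) :
    (S2 P X z - S P X : ℝ) ≤ X * (1 + log X) / D + 10 * X / log X * (1 + log K) := by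
  have hsmall : (∑ p ∈ primesIcc z X with K ≤ ⌊X⌋₊ / p, #(AP P p X) : ℝ) ≤
      X * (1 + log X) / D := by
    refine sum_card_AP_small_le hX.le hD ((filter_subset _ _).trans (filter_subset _ _)) ?_
    intro p hp
    obtain ⟨hpX, hKp⟩ := mem_filter.1 hp
    exact hAP p (by exact_mod_cast hKz.trans (mem_filter.1 hpX).2.2) hKp
  have hlarge : (∑ p ∈ primesIcc z X with ¬ K ≤ ⌊X⌋₊ / p, #(AP P p X) : ℝ) ≤
      10 * X / log X * (1 + log K) := by
    refine le_trans ?_ (sum_primeCounting_floor_div_le hX hK)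
    have hprime : ∀ p ∈ {p ∈ primesIcc z X | ¬ K ≤ ⌊X⌋₊ / p}, p.Prime ∧ ⌊X⌋₊ / p ≤ K :=
      fun p hp ↦ ⟨(mem_filter.1 (mem_filter.1 hp).1).2.1, (not_le.1 (mem_filter.1 hp).2).le⟩
    exact_mod_cast (sum_le_sum fun p hp ↦ card_AP_le (hprime p hp).1.pos P X).trans
      (sum_div_le_sum_primeCounting_div hprime)
  have hsum : (S2 P X z : ℝ) ≤ S P X + ∑ p ∈ primesIcc z X, (#(AP P p X) : ℝ) :=
    mod_cast S2_le_S_add_sum_card_AP P X z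
  rw [← sum_filter_add_sum_filter_not _ fun p ↦ K ≤ ⌊X⌋₊ / p] at hsum
  linarith

end Bound

section Asymptotics

open Filter

lemma eventually_log_pow_le_self (n : ℕ) : ∀ᶠ X : ℝ in atTop, log X ^ n ≤ X := by
  filter_upwards [(isLittleO_pow_log_id_atTop (n := n)).def one_pos, eventually_ge_atTop 0]
    with X hX hX0
  rw [id_eq, one_mul, norm_of_nonneg hX0] at hX
  exact (le_abs_self _).trans hX

theorem exists_forall_S2_sub_S_le (P : Polynomial ℝ) (hP : ¬ IsLiouvilleNumber (P.coeff 1)) :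
    ∃ B : ℕ, ∃ C₁ > (0 : ℝ), ∀ᶠ X : ℝ in atTop, ∀ z : ℝ, log X ^ B ≤ z →
      (0 : ℝ) ≤ S2 P X z - S P X ∧
      (S2 P X z - S P X : ℝ) ≤ C₁ * (X * (log (log X) / log X)) := by
  obtain ⟨C, hC⟩ := exists_mul_card_AP_lt P hP
  refine ⟨3 * C, 12 + 30 * C, by positivity, ?_⟩
  filter_upwards [tendsto_log_atTop.eventually_ge_atTop (exp 1), eventually_gt_atTop 1,
    eventually_log_pow_le_self (3 * C * 2)] with X hlog hX hpow z hz
  refine ⟨sub_nonneg.2 (mod_cast S_le_S2 P X z), ?_⟩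
  have : 0 < X := by linarith
  set L := log X
  have hL : 2 ≤ L := by linarith [exp_one_gt_d9]
  have hL0 : 0 < L := by linarith
  have hlogL : 1 ≤ log L := (le_log_iff_exp_le hL0).2 hlog
  set D := ⌈L ^ 2⌉₊
  have hD_ge : L ^ 2 ≤ D := Nat.le_ceil _
  have hD_le : (D : ℝ) ≤ L ^ 3 := by
    have := Nat.ceil_lt_add_one (sq_nonneg L)
    nlinarith
  have hD : 2 ≤ D := by
    have : (2 : ℝ) ≤ D := by nlinarith
    exact_mod_cast this
  have hK_le : ((D ^ C : ℕ) : ℝ) ≤ L ^ (3 * C) := by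
    rw [Nat.cast_pow, pow_mul]
    gcongr
  have hK_sq : ((D ^ C : ℕ) : ℝ) ^ 2 ≤ X := by
    rw [pow_mul] at hpow
    exact (pow_le_pow_left₀ (Nat.cast_nonneg _) hK_le 2).trans hpow
  have hlogK : log (D ^ C : ℕ) ≤ 3 * C * log L := by
    calc log (D ^ C : ℕ) ≤ log (L ^ (3 * C)) :=
          log_le_log (mod_cast Nat.pow_pos (by omega)) hK_le
      _ = 3 * C * log L := by rw [log_pow]; push_cast; ring
  calc (S2 P X z - S P X : ℝ)
      ≤ X * (1 + L) / D + 10 * X / L * (1 + log (D ^ C : ℕ)) :=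
        S2_sub_S_le hX (by omega) hK_sq (hK_le.trans hz) fun p hp hpX ↦ (hC D p X hD hp hpX).le
    _ ≤ X * (log L * L + log L * L) / L ^ 2 + 10 * X / L * (log L + 3 * C * log L) := by
        gcongr
        · nlinarith
        · nlinarith
    _ = (12 + 30 * C) * (X * (log L / L)) := by field_simp; ring

variable {A : ℝ}

lemma log_zf {X : ℝ} (hX : 0 < X) (A : ℝ) :
    log (zf A X) = 1 / (2 * (A + 1)) / log (log X) * log X :=
  log_rpow hX _

lemma zf_pos {X : ℝ} (hX : 0 < X) (A : ℝ) : 0 < zf A X :=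
  rpow_pos_of_pos hX _

lemma eventually_log_pow_le_zf (hA : -1 < A) (B : ℕ) :
    ∀ᶠ X : ℝ in atTop, log X ^ B ≤ zf A X := by
  set c := 1 / (2 * (A + 1))
  have hc : 0 < c := one_div_pos.2 (by linarith)
  have hlogsq := tendsto_log_atTop.eventually
    ((isLittleO_pow_log_id_atTop (n := 2)).def (div_pos hc (Nat.cast_add_one_pos B)))
  filter_upwards [hlogsq, eventually_gt_atTop 0, tendsto_log_atTop.eventually_gt_atTop 1]
    with X hsq hX hL
  have hL0 : 0 < log X := by linarith
  have hloglog : 0 < log (log X) := log_pos hL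
  refine (log_le_log_iff (by positivity) (zf_pos hX A)).1 ?_
  rw [id_eq, norm_of_nonneg (by positivity), norm_of_nonneg hL0.le, div_mul_eq_mul_div,
    le_div_iff₀ (by positivity)] at hsq
  rw [log_pow, log_zf hX, div_mul_eq_mul_div, le_div_iff₀ hloglog]
  nlinarith

lemma tendsto_log_zf_atTop (hA : -1 < A) : Tendsto (fun X ↦ log (zf A X)) atTop atTop :=
  tendsto_log_atTop.comp <| tendsto_atTop_mono' atTop
    ((eventually_log_pow_le_zf hA 1).mono fun X hX ↦ by rwa [pow_one] at hX) tendsto_log_atTop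

theorem statement10_general (P : Polynomial ℝ) (hP : ¬ IsLiouvilleNumber (P.coeff 1))
    (hA : -1 < A) :
    ∃ C₁ > (0 : ℝ), ∀ᶠ X : ℝ in atTop,
      (0 : ℝ) ≤ S2 P X (zf A X) - S P X ∧
      (S2 P X (zf A X) - S P X : ℝ) ≤ C₁ * (X / log (zf A X)) := by
  obtain ⟨B, C, hC, hbound⟩ := exists_forall_S2_sub_S_le P hP
  have hA1 : 0 < A + 1 := by linarith
  refine ⟨C * (1 / (2 * (A + 1))), by positivity, ?_⟩
  filter_upwards [hbound, eventually_log_pow_le_zf hA B, eventually_gt_atTop 0,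
    tendsto_log_atTop.eventually_gt_atTop 1] with X hX hz hX0 hL
  refine ⟨(hX _ hz).1, (hX _ hz).2.trans_eq ?_⟩
  have hL0 : log X ≠ 0 := by linarith
  have hloglog : log (log X) ≠ 0 := (log_pos hL).ne'
  rw [log_zf hX0]
  field_simp

lemma eventually_div_log_zf_le (hA : -1 < A) {r : ℝ} (hr : r ≤ 1) (s t : ℝ) :
    ∀ᶠ X : ℝ in atTop, X / log (zf A X) ≤
      X / log (zf A X) ^ r + X / log (zf A X) ^ s + X / log X ^ t := by
  filter_upwards [(tendsto_log_zf_atTop hA).eventually_ge_atTop 1, eventually_gt_atTop 1]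
    with X hz hX
  have hL : 0 < log X := log_pos hX
  have hpow : log (zf A X) ^ r ≤ log (zf A X) := rpow_le_self_of_one_le hz hr
  have hs : 0 ≤ X / log (zf A X) ^ s := by positivity
  have ht : 0 ≤ X / log X ^ t := by positivity
  calc X / log (zf A X) ≤ X / log (zf A X) ^ r := by gcongr
    _ ≤ _ := by linarith

end Asymptotics

/-- With `c = 1/(2(A+1))` and `z = X^(c/log log X)`: there are `μ ∈ (0,1)` and `C₁ > 0`
such that for all sufficiently large `X`,
`0 ≤ S(X,z) - S(X) ≤ C₁·(X/(log z)^(1-ε) + X/(log z)^(εμ) + X/(log X)^A)`. -/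
theorem statement10 (P : Polynomial ℝ) (hP : ¬ IsLiouvilleNumber (P.coeff 1))
    (ε A : ℝ) (hε : ε ∈ Set.Ioo (0 : ℝ) 1) (hA : 0 < A) :
    ∃ μ : ℝ, μ ∈ Set.Ioo (0 : ℝ) 1 ∧ ∃ C₁ > (0 : ℝ), ∃ X₂ : ℝ, ∀ X : ℝ, X ≥ X₂ →
      (0 : ℝ) ≤ (S2 P X (zf A X) : ℝ) - (S P X : ℝ) ∧
      (S2 P X (zf A X) : ℝ) - (S P X : ℝ)
        ≤ C₁ * (X / (Real.log (zf A X)) ^ (1 - ε) + X / (Real.log (zf A X)) ^ (ε * μ)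
            + X / (Real.log X) ^ A) := by
  have hA' : -1 < A := by linarith
  obtain ⟨C₁, hC₁, hbound⟩ := statement10_general P hP hA'
  have hterms := eventually_div_log_zf_le hA' (sub_le_self 1 hε.1.le) (ε * (1 / 2)) A
  obtain ⟨X₂, hX₂⟩ := Filter.eventually_atTop.1 (hbound.and hterms)
  refine ⟨1 / 2, by norm_num, C₁, hC₁, X₂, fun X hX ↦ ?_⟩
  obtain ⟨⟨hnonneg, hle⟩, hterms⟩ := hX₂ X hX
  exact ⟨hnonneg, hle.trans (mul_le_mul_of_nonneg_left hterms hC₁.le)⟩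
end

section
/- Let P ∈ ℝ[x] be a polynomial whose coefficient of x is non-Liouville. Fix ε ∈ (0,1) and A > 0, set c = 1/(2(A+1)) and z = X^{c/log log X}. Then there exist μ ∈ (0,1) and a constant C₁ > 0 such that for all sufficiently large X, | S(X,z) − X/ζ(2) | ≤ C₁·( X/(log z)^{εμ} + X/(log log X)^{1/3} ), where ζ(2) = π²/6. -/
open Real Finset

/-!
The sieve needs `#{x ≤ X : d ∣ x, d ∣ ⌊P(x)⌋} = X / d² + O(X / z²)` for all `d ≤ z`, with `z` any
small power of `X`. Since `d ∣ ⌊t⌋` says that the fractional part of `t / d` is less than `1 / d`,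
this is a discrepancy bound for `y ↦ P(dy) / d`, and so follows from bounds on the exponential sums
of `h P(dy) / d`. The linear coefficient `h a₁` of this polynomial does not depend on `d`. By van
der Corput differencing, an exponential sum over `y < N` that is not smaller than `N` by a power of
`N` forces every coefficient of positive degree to be close to a rational of small denominator (the
inverse form of Weyl's inequality); for a non-Liouville `a₁` this fails at the linear coefficient.
Sieving first by the primes up to a multiple of `log z` costs few divisors, and the larger primes
contribute `O(X / log z)` by convergence of `∑ 1 / p²`.
-/

namespace WeylSieve

open Polynomial
open scoped FourierTransform

lemma coe_int_unitAddCircle (n : ℤ) : ((n : ℝ) : UnitAddCircle) = 0 :=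
  (AddCircle.coe_eq_zero_iff _).mpr ⟨n, by simp⟩

lemma fourierChar_sub_round (x : ℝ) : 𝐞 (x - round x) = 𝐞 x := by
  have periodic : 𝐞 (round x : ℝ) = 1 := by
    rw [← Circle.coe_eq_one, Real.fourierChar_apply, Complex.exp_eq_one_iff]
    exact ⟨round x, by push_cast; ring⟩
  rw [AddChar.map_sub_eq_div, periodic, div_one]

lemma norm_fourierChar_sub_one_le (x : ℝ) :
    ‖(𝐞 x : ℂ) - 1‖ ≤ 2 * π * ‖(x : UnitAddCircle)‖ := by
  rw [UnitAddCircle.norm_eq, ← fourierChar_sub_round, Real.fourierChar_apply, mul_comm _ Complex.I]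
  refine (Real.norm_exp_I_mul_ofReal_sub_one_le (x := 2 * π * (x - round x))).trans_eq ?_
  rw [Real.norm_eq_abs, abs_mul, abs_of_pos Real.two_pi_pos]

lemma four_mul_norm_le_norm_fourierChar_sub_one (x : ℝ) :
    4 * ‖(x : UnitAddCircle)‖ ≤ ‖(𝐞 x : ℂ) - 1‖ := by
  have hr : |2 * π * (x - round x) / 2| ≤ π / 2 := by
    have := mul_le_mul_of_nonneg_left (abs_sub_round x) pi_pos.le
    rw [show 2 * π * (x - round x) / 2 = π * (x - round x) by ring, abs_mul, abs_of_pos pi_pos]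
    linarith
  have jordan := Real.mul_abs_le_abs_sin hr
  rw [UnitAddCircle.norm_eq, ← fourierChar_sub_round, Real.fourierChar_apply, mul_comm _ Complex.I,
    Complex.norm_exp_I_mul_ofReal_sub_one, norm_mul, Real.norm_ofNat, Real.norm_eq_abs]
  calc 4 * |x - round x| = 2 * (2 / π * |2 * π * (x - round x) / 2|) := by
        rw [abs_div, abs_mul, abs_of_pos Real.two_pi_pos, abs_two]; field_simp; ring
    _ ≤ _ := by gcongr

/-- The exponential sum `∑_{y < N} e(f(y))`, where `e(t) = exp(2πit)`. -/
noncomputable def expSum (f : ℕ → ℝ) (N : ℕ) : ℂ := ∑ y ∈ range N, (𝐞 (f y) : ℂ)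

lemma norm_expSum_le (f : ℕ → ℝ) (N : ℕ) : ‖expSum f N‖ ≤ N :=
  (norm_sum_le_of_le _ fun _ _ => (Circle.norm_coe _).le).trans_eq (by simp)

lemma expSum_linear_mul_sub_one (b c : ℝ) (N : ℕ) :
    expSum (fun y => b * y + c) N * ((𝐞 b : ℂ) - 1) = 𝐞 c * ((𝐞 (N * b) : ℂ) - 1) := by
  have hpow : ∀ y : ℕ, (𝐞 (y * b) : ℂ) = (𝐞 b : ℂ) ^ y := fun y => by
    rw [← nsmul_eq_mul, AddChar.map_nsmul_eq_pow, Circle.coe_pow]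
  have hgeom : expSum (fun y => b * y + c) N = 𝐞 c * ∑ y ∈ range N, (𝐞 b : ℂ) ^ y := by
    rw [expSum, mul_sum]
    refine sum_congr rfl fun y _ => ?_
    rw [AddChar.map_add_eq_mul, mul_comm b, Circle.coe_mul, hpow, mul_comm]
  rw [hgeom, mul_assoc, geom_sum_mul, hpow]

lemma norm_expSum_linear_mul_norm_le (b c : ℝ) (N : ℕ) :
    ‖expSum (fun y => b * y + c) N‖ * ‖(b : UnitAddCircle)‖ ≤ 1 / 2 := by
  have htelescope : ‖expSum (fun y => b * y + c) N‖ * ‖(𝐞 b : ℂ) - 1‖ ≤ 2 := by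
    rw [← norm_mul, expSum_linear_mul_sub_one, norm_mul, Circle.norm_coe, one_mul]
    refine (norm_sub_le _ _).trans_eq ?_
    rw [Circle.norm_coe]
    norm_num
  have := mul_le_mul_of_nonneg_left (four_mul_norm_le_norm_fourierChar_sub_one b)
    (norm_nonneg (expSum (fun y => b * y + c) N))
  linarith

lemma norm_expSum_linear_le {b s : ℝ} (hs : 0 < s) (hb : s ≤ ‖(b : UnitAddCircle)‖) (N : ℕ) :
    ‖expSum (fun y => b * y) N‖ ≤ 1 / (2 * s) := by
  have h := norm_expSum_linear_mul_norm_le b 0 N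
  simp only [add_zero] at h
  rw [le_div_iff₀ (by positivity)]
  nlinarith [norm_nonneg (expSum (fun y => b * y) N)]

/-! ### Multiples close to an integer -/

lemma card_le_of_forall_sub_le {T : Finset ℤ} {D : ℝ} (hD : 0 ≤ D)
    (h : ∀ x ∈ T, ∀ y ∈ T, (x : ℝ) - y ≤ D) : (#T : ℝ) ≤ D + 1 := by
  rcases T.eq_empty_or_nonempty with rfl | hne
  · simp only [card_empty, Nat.cast_zero]; positivity
  have hsub : T ⊆ Icc (T.min' hne) (T.max' hne) := fun x hx =>
    mem_Icc.mpr ⟨T.min'_le x hx, T.le_max' x hx⟩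
  have hcard : (#T : ℤ) ≤ T.max' hne - T.min' hne + 1 := by
    have := card_le_card hsub
    have := T.min'_le _ (T.max'_mem hne)
    simp only [Int.card_Icc] at *
    omega
  have hdiam := h _ (T.max'_mem hne) _ (T.min'_mem hne)
  have : (#T : ℝ) ≤ T.max' hne - T.min' hne + 1 := mod_cast hcard
  linarith

lemma card_le_of_norm_linear_le {θ β ε : ℝ} {N : ℕ} {H : Finset ℕ} (hθ : θ ≠ 0) (hε : 0 ≤ ε)
    (hH : H ⊆ range N) (hnear : ∀ h ∈ H, ‖((θ * h + β : ℝ) : UnitAddCircle)‖ ≤ ε) :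
    (#H : ℝ) ≤ (|θ| * N + 2 * ε + 1) * (2 * ε / |θ| + 1) := by
  have hθ' : 0 < |θ| := abs_pos.mpr hθ
  set n : ℕ → ℤ := fun h => round (θ * h + β)
  simp only [UnitAddCircle.norm_eq, abs_le] at hnear
  have hfibre : ∀ t ∈ H.image n, (#{h ∈ H | n h = t} : ℝ) ≤ 2 * ε / |θ| + 1 := by
    intro t _
    rw [← card_image_of_injective _ (Nat.cast_injective (R := ℤ))]
    refine card_le_of_forall_sub_le (by positivity) ?_
    simp only [forall_mem_image, mem_filter, and_imp, Int.cast_natCast]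
    intro x hx hxt y hy hyt
    have hx' := hnear x hx
    have hy' := hnear y hy
    have : |θ * (x - y)| ≤ 2 * ε := by
      rw [show round (θ * x + β) = t from hxt] at hx'
      rw [show round (θ * y + β) = t from hyt] at hy'
      rw [abs_le]
      constructor <;> linarith
    rw [le_div_iff₀ hθ', mul_comm]
    rw [abs_mul] at this
    exact (mul_le_mul_of_nonneg_left (le_abs_self _) hθ'.le).trans this
  have himage : (#(H.image n) : ℝ) ≤ |θ| * N + 2 * ε + 1 := by
    refine card_le_of_forall_sub_le (by positivity) ?_
    simp only [forall_mem_image]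
    intro x hx y hy
    have hxy : |(x : ℝ) - y| ≤ N := by
      have hxN : (x : ℝ) < N := mod_cast mem_range.mp (hH hx)
      have hyN : (y : ℝ) < N := mod_cast mem_range.mp (hH hy)
      rw [abs_le]
      constructor <;> linarith [(x.cast_nonneg : (0 : ℝ) ≤ x), (y.cast_nonneg : (0 : ℝ) ≤ y)]
    have : θ * (x - y) ≤ |θ| * N :=
      (le_abs_self _).trans (by rw [abs_mul]; gcongr)
    linarith [(hnear x hx).1, (hnear y hy).2]
  calc (#H : ℝ) = ∑ t ∈ H.image n, (#{h ∈ H | n h = t} : ℝ) := mod_cast card_eq_sum_card_image n H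
    _ ≤ #(H.image n) * (2 * ε / |θ| + 1) := by
        rw [← nsmul_eq_mul]; exact sum_le_card_nsmul _ _ _ hfibre
    _ ≤ _ := by gcongr

lemma card_le_of_norm_mul_le {α ε : ℝ} {q N : ℕ} {H : Finset ℕ} (hq : 1 ≤ q) (hε : 0 ≤ ε)
    (hqα : ‖((q * α : ℝ) : UnitAddCircle)‖ ≠ 0) (hH : H ⊆ range N)
    (hnear : ∀ h ∈ H, ‖((α * h : ℝ) : UnitAddCircle)‖ ≤ ε) :
    (#H : ℝ) ≤ (‖((q * α : ℝ) : UnitAddCircle)‖ * N + (2 * ε + 1) * q) *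
      (2 * ε * q / ‖((q * α : ℝ) : UnitAddCircle)‖ + 1) := by
  have hq0 : (0 : ℝ) < q := mod_cast hq
  rw [UnitAddCircle.norm_eq] at hqα ⊢
  set a := round (q * α)
  have hresidue : ∀ r ∈ range q, (#{h ∈ H | h % q = r} : ℝ) ≤
      (|(q * α - a) / q| * N + 2 * ε + 1) * (2 * ε / |(q * α - a) / q| + 1) := by
    intro r _
    refine card_le_of_norm_linear_le (β := a * r / q)
      (div_ne_zero (abs_ne_zero.mp hqα) hq0.ne') hε ((filter_subset _ _).trans hH) fun h hh => ?_
    obtain ⟨hhH, rfl⟩ := mem_filter.mp hh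
    -- `α h` and `(α - a / q) h + a r / q` differ by the integer `a ⌊h / q⌋`.
    have hdiv : (h : ℝ) = q * (h / q : ℕ) + (h % q : ℕ) := mod_cast (Nat.div_add_mod h q).symm
    have hshift : (q * α - a) / q * h + a * (h % q : ℕ) / q = α * h - (a * (h / q : ℕ) : ℤ) := by
      rw [Int.cast_mul, Int.cast_natCast]
      field_simp
      linear_combination (-(a : ℝ)) * hdiv
    rw [hshift, AddCircle.coe_sub, coe_int_unitAddCircle, sub_zero]
    exact hnear h hhH
  calc (#H : ℝ) = ∑ r ∈ range q, (#{h ∈ H | h % q = r} : ℝ) := by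
        exact_mod_cast card_eq_sum_card_fiberwise fun h _ => by
          simpa using Nat.mod_lt h hq
    _ ≤ q * ((|(q * α - a) / q| * N + 2 * ε + 1) * (2 * ε / |(q * α - a) / q| + 1)) := by
        simpa using sum_le_card_nsmul _ _ _ hresidue
    _ = _ := by rw [abs_div, Nat.abs_cast]; field_simp; ring

lemma exists_close_of_mul_lt_card {D N : ℕ} {H : Finset ℕ} (hH : H ⊆ range N)
    (hcard : N < D * (#H - 1)) : ∃ x ∈ H, ∃ y ∈ H, y < x ∧ x - y < D := by
  have hD : 0 < D := Nat.pos_of_ne_zero (by rintro rfl; simp at hcard)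
  have hlt : #(range (N / D + 1)) < #H := by
    have : N / D < #H - 1 := (Nat.div_lt_iff_lt_mul hD).mpr (by rwa [mul_comm] at hcard)
    rw [card_range]
    exact Nat.add_lt_of_lt_sub this
  obtain ⟨x, hx, y, hy, hne, hdiv⟩ := exists_ne_map_eq_of_card_lt_of_maps_to (f := (· / D)) hlt
    fun h hh => by
      simpa [Nat.lt_succ_iff] using Nat.div_le_div_right (mem_range.mp (hH hh)).le
  have hsub : ∀ {u v : ℕ}, v < u → u / D = v / D → u - v < D := fun {u v} huv h => by
    have hu := Nat.div_add_mod u D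
    have hv := Nat.div_add_mod v D
    have := Nat.mod_lt u hD
    rw [h] at hu
    omega
  rcases hne.lt_or_gt with h | h
  · exact ⟨y, hy, x, hx, h, hsub h hdiv.symm⟩
  · exact ⟨x, hx, y, hy, h, hsub h hdiv⟩

lemma norm_mul_le_of_dense {α ε : ℝ} {q M N : ℕ} {H : Finset ℕ} (hM : 1 ≤ M) (hq : 1 ≤ q)
    (hqM : q ≤ 2 * M) (hqα : ‖((q * α : ℝ) : UnitAddCircle)‖ ≤ 2 * ε) (hH : H ⊆ range N)
    (hcard : N ≤ M * #H) (hε : 0 ≤ ε) (hεM : ε * (24 * M ^ 2) ≤ 1) (hN : 16 * M ^ 2 ≤ N)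
    (hnear : ∀ h ∈ H, ‖((α * h : ℝ) : UnitAddCircle)‖ ≤ ε) :
    ‖((q * α : ℝ) : UnitAddCircle)‖ ≤ 16 * M ^ 3 * ε / N := by
  rcases (norm_nonneg ((q * α : ℝ) : UnitAddCircle)).eq_or_lt' with hθ | hθ
  · rw [hθ]; positivity
  have hdense := card_le_of_norm_mul_le hq hε hθ.ne' hH hnear
  set θ := ‖((q * α : ℝ) : UnitAddCircle)‖
  replace hM : (1 : ℝ) ≤ M := mod_cast hM
  replace hN : 16 * (M : ℝ) ^ 2 ≤ N := mod_cast hN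
  replace hqM : (q : ℝ) ≤ 2 * M := mod_cast hqM
  have hεM1 : ε * M ≤ ε * M ^ 2 := by gcongr; exact le_self_pow₀ hM two_ne_zero
  have hcount : (N : ℝ) ≤ M * ((θ * N + 13 / 12 * q) * (2 * ε * q / θ + 1)) := by
    refine (show (N : ℝ) ≤ M * #H from mod_cast hcard).trans ?_
    gcongr
    refine hdense.trans ?_
    gcongr
    nlinarith
  have hexpand : M * ((θ * N + 13 / 12 * q) * (2 * ε * q / θ + 1)) =
      (2 * ε * (M * q) + θ * M) * N + 13 / 12 * (M * q) + 13 / 6 * (M * q ^ 2 * ε) / θ := by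
    field_simp [hθ.ne']
    ring
  have hlinear : (2 * ε * (M * q) + θ * M) * N ≤ 1 / 4 * N := by
    have : ε * (M * q) ≤ ε * (M * (2 * M)) := by gcongr
    have : θ * M ≤ 2 * ε * M := by gcongr
    gcongr
    linarith
  have hconst : 13 / 12 * (M * q) ≤ 13 / 96 * (N : ℝ) := by nlinarith
  have hquotient : 13 / 6 * (M * q ^ 2 * ε) / θ ≤ 13 / 6 * (M * (2 * M) ^ 2 * ε) / θ := by gcongr
  have : 59 / 96 * (N : ℝ) ≤ 13 / 6 * (M * (2 * M) ^ 2 * ε) / θ := by linarith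
  rw [le_div_iff₀ hθ] at this
  rw [le_div_iff₀ (by nlinarith)]
  have : 0 ≤ M ^ 3 * ε := by positivity
  linarith

theorem exists_norm_mul_le_of_dense {α ε : ℝ} {M N : ℕ} {H : Finset ℕ} (hM : 1 ≤ M)
    (hH : H ⊆ range N) (hcard : N ≤ M * #H) (hε : 0 ≤ ε) (hεM : ε * (24 * M ^ 2) ≤ 1)
    (hN : 16 * M ^ 2 ≤ N) (hnear : ∀ h ∈ H, ‖((α * h : ℝ) : UnitAddCircle)‖ ≤ ε) :
    ∃ q, 1 ≤ q ∧ q ≤ 2 * M ∧ ‖((q * α : ℝ) : UnitAddCircle)‖ ≤ 16 * M ^ 3 * ε / N := by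
  obtain ⟨x, hx, y, hy, hyx, hxy⟩ : ∃ x ∈ H, ∃ y ∈ H, y < x ∧ x - y < 2 * M + 1 := by
    refine exists_close_of_mul_lt_card hH ?_
    zify [show 1 ≤ #H by nlinarith]
    zify at hcard hN hM
    nlinarith
  refine ⟨x - y, by omega, by omega,
    norm_mul_le_of_dense hM (by omega) (by omega) ?_ hH hcard hε hεM hN hnear⟩
  rw [Nat.cast_sub hyx.le, sub_mul, mul_comm, mul_comm (y : ℝ), AddCircle.coe_sub, two_mul]
  exact norm_sub_le_of_le (hnear x hx) (hnear y hy)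

/-! ### Van der Corput differencing -/

lemma coe_fourierChar_sub (x y : ℝ) :
    (𝐞 (x - y) : ℂ) = 𝐞 x * (starRingEnd ℂ) (𝐞 y) := by
  rw [AddChar.map_sub_eq_div, Circle.coe_div, div_eq_mul_inv, ← Circle.coe_inv,
    Circle.coe_inv_eq_conj]

lemma norm_expSum_sq_add (f : ℕ → ℝ) (N : ℕ) :
    ‖expSum f N‖ ^ 2 + N =
      2 * (∑ h ∈ range N, expSum (fun y => f (h + y) - f y) (N - h)).re := by
  induction N with
  | zero => simp [expSum]
  | succ N ih =>
    have hlast : ∀ h ∈ range (N + 1), expSum (fun y => f (h + y) - f y) (N + 1 - h) =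
        expSum (fun y => f (h + y) - f y) (N - h) + 𝐞 (f N - f (N - h)) := fun h hh => by
      have hhN := Nat.lt_succ_iff.mp (mem_range.mp hh)
      rw [Nat.succ_sub hhN, expSum, sum_range_succ, Nat.add_sub_cancel' hhN]
      rfl
    have hdiag : ∑ h ∈ range (N + 1), (𝐞 (f N - f (N - h)) : ℂ) =
        𝐞 (f N) * (starRingEnd ℂ) (expSum f (N + 1)) := by
      rw [← sum_range_reflect, expSum, map_sum, mul_sum]
      refine sum_congr rfl fun y hy => ?_
      have := Nat.lt_succ_iff.mp (mem_range.mp hy)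
      rw [coe_fourierChar_sub, show N - (N + 1 - 1 - y) = y by omega]
    have hunit : Complex.normSq (𝐞 (f N)) = 1 := Circle.normSq_coe _
    have hsucc : expSum f (N + 1) = expSum f N + 𝐞 (f N) := sum_range_succ _ _
    rw [sum_congr rfl hlast, sum_add_distrib, sum_range_succ, hdiag, hsucc, Nat.sub_self]
    simp only [← Complex.normSq_eq_norm_sq] at ih ⊢
    simp only [Complex.normSq_apply, Complex.add_re, Complex.add_im, Complex.mul_re,
      Complex.conj_re, Complex.conj_im, map_add] at hunit ih ⊢
    rw [show (expSum (fun y => f (N + y) - f y) 0).re = 0 by simp [expSum]]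
    push_cast
    linear_combination ih - hunit

theorem norm_expSum_sq_le (f : ℕ → ℝ) (N : ℕ) :
    ‖expSum f N‖ ^ 2 ≤ 2 * ∑ h ∈ range N, ‖expSum (fun y => f (h + y) - f y) (N - h)‖ := by
  have heq := norm_expSum_sq_add f N
  have hre := (Complex.re_le_norm _).trans
    (norm_sum_le (range N) fun h => expSum (fun y => f (h + y) - f y) (N - h))
  linarith [(N.cast_nonneg : (0 : ℝ) ≤ N)]

lemma sum_le_card_filter_mul_add {ι : Type*} (s : Finset ι) {T : ι → ℝ} {B δ : ℝ}
    (hB : ∀ i ∈ s, T i ≤ B) (hδ : 0 ≤ δ) :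
    ∑ i ∈ s, T i ≤ #{i ∈ s | δ ≤ T i} * B + #s * δ := by
  rw [← sum_filter_add_sum_filter_not s (fun i => δ ≤ T i)]
  refine add_le_add ?_ ?_
  · rw [← nsmul_eq_mul]
    exact sum_le_card_nsmul _ _ _ fun i hi => hB i (mem_filter.mp hi).1
  · refine (sum_le_card_nsmul _ _ δ fun i hi => (not_le.mp (mem_filter.mp hi).2).le).trans ?_
    rw [nsmul_eq_mul]
    gcongr
    exact filter_subset _ _

lemma exists_popular_differences {f : ℕ → ℝ} {M N : ℕ} (hM : 2 ≤ M) (hN : 1 ≤ N)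
    (hf : N ≤ M * ‖expSum f N‖) :
    ∃ H ⊆ range N, N ≤ M ^ 4 * #H ∧
      ∀ h ∈ H, N ≤ M ^ 4 * ‖expSum (fun y => f (h + y) - f y) (N - h)‖ := by
  set T : ℕ → ℝ := fun h => ‖expSum (fun y => f (h + y) - f y) (N - h)‖
  replace hM : (2 : ℝ) ≤ M := mod_cast hM
  replace hN : (1 : ℝ) ≤ N := mod_cast hN
  have hM4 : (4 : ℝ) * M ^ 2 ≤ M ^ 4 := by nlinarith [pow_le_pow_left₀ zero_le_two hM 2]
  set H := {h ∈ range N | N / (4 * (M : ℝ) ^ 2) ≤ T h} with hH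
  refine ⟨H, filter_subset _ _, ?_, fun h hh => ?_⟩
  · have hpop := sum_le_card_filter_mul_add (range N) (T := T) (B := N) (δ := N / (4 * (M : ℝ) ^ 2))
      (fun h _ => (norm_expSum_le _ _).trans (mod_cast Nat.sub_le N h)) (by positivity)
    rw [card_range] at hpop
    have hsq : (N : ℝ) ^ 2 ≤ 2 * M ^ 2 * #H * N + N ^ 2 / 2 := by
      calc (N : ℝ) ^ 2 ≤ M ^ 2 * ‖expSum f N‖ ^ 2 := by rw [← mul_pow]; gcongr
        _ ≤ (M : ℝ) ^ 2 * (2 * (#H * N + N * (N / (4 * M ^ 2)))) := by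
            gcongr
            exact (norm_expSum_sq_le f N).trans (by gcongr)
        _ = _ := by field_simp; ring
    have : (N : ℝ) ≤ 4 * M ^ 2 * #H := by nlinarith
    exact_mod_cast this.trans (show _ ≤ (M : ℝ) ^ 4 * #H by gcongr)
  · have := (mem_filter.mp hh).2
    rw [div_le_iff₀' (by positivity)] at this
    exact this.trans (by gcongr)

lemma coeff_taylor_of_natDegree_le {Q : ℝ[X]} {n : ℕ} (hQ : Q.natDegree ≤ n) (h : ℝ) :
    (taylor h Q).coeff n = Q.coeff n := by
  rcases hQ.eq_or_lt with rfl | hlt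
  · exact coeff_taylor_natDegree ..
  · rw [coeff_eq_zero_of_natDegree_lt hlt,
      coeff_eq_zero_of_natDegree_lt (by rwa [natDegree_taylor])]

lemma natDegree_taylor_sub_self_le {Q : ℝ[X]} {k : ℕ} (hQ : Q.natDegree ≤ k + 1) (h : ℝ) :
    (taylor h Q - Q).natDegree ≤ k := by
  rw [natDegree_le_iff_coeff_eq_zero]
  intro n hn
  rw [coeff_sub, coeff_taylor_of_natDegree_le (hQ.trans hn), sub_self]

lemma coeff_taylor_sub_self {Q : ℝ[X]} {k : ℕ} (hQ : Q.natDegree ≤ k + 1) (h : ℝ) :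
    (taylor h Q - Q).coeff k = (k + 1) * h * Q.coeff (k + 1) := by
  rw [coeff_sub, taylor_coeff, eval_eq_sum_range' (n := 2)
    ((natDegree_hasseDeriv_le Q k).trans_lt (by omega))]
  simp [sum_range_succ, hasseDeriv_coeff, add_comm 1 k]
  ring

/-! ### The inverse form of Weyl's inequality -/

/-- From degree `j` on, the coefficients of `Q` are close to rationals with one common small
denominator: `M` measures the loss in an exponential sum of length `N`, and the error
`M ^ C / N ^ i` allowed for the `i`-th coefficient is the natural one up to a power of `M`. -/
def CoeffsNearRational (Q : ℝ[X]) (j C M N : ℕ) : Prop :=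
  ∃ q, 1 ≤ q ∧ q ≤ M ^ C ∧
    ∀ i, j ≤ i → ‖((q * Q.coeff i : ℝ) : UnitAddCircle)‖ ≤ (M : ℝ) ^ C / (N : ℝ) ^ i

/-- The inverse form of Weyl's inequality for polynomials of degree at most `k`, restricted to the
coefficients of degree at least `j`: if an exponential sum is large, these coefficients are nearly
rational. -/
def InverseWeyl (k j : ℕ) : Prop :=
  ∃ C, ∀ Q : ℝ[X], Q.natDegree ≤ k → ∀ M N : ℕ, 2 ≤ M → 1 ≤ N →
    N ≤ M * ‖expSum (fun y => Q.eval (y : ℝ)) N‖ → CoeffsNearRational Q j C M N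

lemma CoeffsNearRational.mono {Q : ℝ[X]} {j C C' M N : ℕ} (hM : 1 ≤ M) (hC : C ≤ C')
    (h : CoeffsNearRational Q j C M N) : CoeffsNearRational Q j C' M N := by
  obtain ⟨q, hq, hqM, hcoeff⟩ := h
  refine ⟨q, hq, hqM.trans (Nat.pow_le_pow_right hM hC), fun i hi => (hcoeff i hi).trans ?_⟩
  gcongr
  exact mod_cast hM

lemma coeffsNearRational_of_leading {Q : ℝ[X]} {k C M N q : ℕ} (hQ : Q.natDegree ≤ k) (hq : 1 ≤ q)
    (hqM : q ≤ M ^ C)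
    (hlead : ‖((q * Q.coeff k : ℝ) : UnitAddCircle)‖ ≤ (M : ℝ) ^ C / (N : ℝ) ^ k) :
    CoeffsNearRational Q k C M N := by
  refine ⟨q, hq, hqM, fun i hi => ?_⟩
  rcases hi.eq_or_lt with rfl | hi
  · exact hlead
  · rw [coeff_eq_zero_of_natDegree_lt (hQ.trans_lt hi), mul_zero, AddCircle.coe_zero, norm_zero]
    positivity

lemma norm_unitAddCircle_le_one (x : UnitAddCircle) : ‖x‖ ≤ 1 := by
  have := AddCircle.norm_le_half_period 1 one_ne_zero (x := x)
  norm_num at this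
  linarith

lemma coeffsNearRational_of_le_pow {Q : ℝ[X]} {k j E M N : ℕ} (hQ : Q.natDegree ≤ k) (hM : 1 ≤ M)
    (hN : 1 ≤ N) (hNM : N ≤ M ^ E) : CoeffsNearRational Q j (E * k) M N := by
  refine ⟨1, le_rfl, Nat.one_le_pow _ _ hM, fun i _ => ?_⟩
  rcases le_or_gt i k with hi | hi
  · refine (norm_unitAddCircle_le_one _).trans ((one_le_div (by positivity)).mpr ?_)
    have : N ^ i ≤ M ^ (E * k) := by
      rw [pow_mul]
      exact (Nat.pow_le_pow_left hNM i).trans (Nat.pow_le_pow_right (Nat.one_le_pow _ _ hM) hi)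
    exact_mod_cast this
  · rw [coeff_eq_zero_of_natDegree_lt (hQ.trans_lt hi), mul_zero, AddCircle.coe_zero, norm_zero]
    positivity

lemma inverseWeyl_of_large {k j E C : ℕ}
    (h : ∀ Q : ℝ[X], Q.natDegree ≤ k → ∀ M N : ℕ, 2 ≤ M → M ^ E ≤ N →
      N ≤ M * ‖expSum (fun y => Q.eval (y : ℝ)) N‖ → CoeffsNearRational Q j C M N) :
    InverseWeyl k j := by
  refine ⟨max C (E * k), fun Q hQ M N hM hN hsum => ?_⟩
  rcases le_total (M ^ E) N with hNM | hNM
  · exact (h Q hQ M N hM hNM hsum).mono (by omega) (le_max_left _ _)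
  · exact (coeffsNearRational_of_le_pow hQ (by omega) hN hNM).mono (by omega) (le_max_right _ _)

lemma inverseWeyl_one_one : InverseWeyl 1 1 := by
  refine ⟨1, fun Q hQ M N hM hN hsum =>
    coeffsNearRational_of_leading hQ le_rfl (Nat.one_le_pow _ _ (by omega)) ?_⟩
  have hlin : (fun y : ℕ => Q.eval (y : ℝ)) = fun y : ℕ => Q.coeff 1 * y + Q.coeff 0 := by
    funext y
    rw [eval_eq_sum_range' (n := 2) (by omega)]
    simp [sum_range_succ, add_comm]
  rw [hlin] at hsum
  have hgeom := norm_expSum_linear_mul_norm_le (Q.coeff 1) (Q.coeff 0) N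
  rw [Nat.cast_one, one_mul, pow_one, pow_one, le_div_iff₀' (by positivity)]
  calc N * ‖(Q.coeff 1 : UnitAddCircle)‖
      ≤ M * (‖expSum (fun y => Q.coeff 1 * y + Q.coeff 0) N‖ * ‖(Q.coeff 1 : UnitAddCircle)‖) := by
        rw [← mul_assoc]; gcongr
    _ ≤ M * 1 := by gcongr; linarith
    _ = M := mul_one _

lemma exists_common_of_forall_exists {H : Finset ℕ} {D : ℕ} (hD : 1 ≤ D) {p : ℕ → ℕ → Prop}
    (hp : ∀ h ∈ H, ∃ q ∈ Icc 1 D, p h q) :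
    ∃ q ∈ Icc 1 D, ∃ H' ⊆ H, #H ≤ D * #H' ∧ ∀ h ∈ H', p h q := by
  classical
  choose! q hqD hq using hp
  obtain ⟨q₀, hq₀, hcard⟩ := exists_le_card_fiber_of_nsmul_le_card_of_maps_to (M := ℚ) hqD
    (nonempty_Icc.mpr hD) (b := #H / D) (by
      rw [Nat.card_Icc, Nat.add_sub_cancel, nsmul_eq_mul]; field_simp; rfl)
  refine ⟨q₀, hq₀, {h ∈ H | q h = q₀}, filter_subset _ _, ?_, fun h hh => ?_⟩
  · rw [div_le_iff₀' (by positivity)] at hcard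
    exact_mod_cast hcard
  · obtain ⟨hhH, rfl⟩ := mem_filter.mp hh
    exact hq h hhH

lemma exists_norm_leadingCoeff_mul_le {Q : ℝ[X]} {k C M N h : ℕ} (hM : 1 ≤ M) (hh : h < N)
    (hsum : N ≤ M ^ 4 * ‖expSum (fun y => Q.eval ((h + y : ℕ) : ℝ) - Q.eval (y : ℝ)) (N - h)‖)
    (hQ : Q.natDegree ≤ k + 1)
    (hnear : CoeffsNearRational (taylor (h : ℝ) Q - Q) k C (M ^ 4) (N - h)) :
    ∃ q ∈ Icc 1 (M ^ (4 * C)),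
      ‖((q * (k + 1) * Q.coeff (k + 1) * h : ℝ) : UnitAddCircle)‖ ≤
        (M : ℝ) ^ (4 * C + 4 * k) / (N : ℝ) ^ k := by
  obtain ⟨q, hq, hqM, hcoeff⟩ := hnear
  refine ⟨q, mem_Icc.mpr ⟨hq, by rwa [pow_mul]⟩, ?_⟩
  have hlen : (N : ℝ) ≤ M ^ 4 * (N - h : ℕ) :=
    hsum.trans (by gcongr; exact norm_expSum_le _ _)
  have hpos : (0 : ℝ) < (N - h : ℕ) := mod_cast Nat.sub_pos_of_lt hh
  have := hcoeff k le_rfl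
  rw [coeff_taylor_sub_self hQ] at this
  rw [show (q : ℝ) * (k + 1) * Q.coeff (k + 1) * h = q * ((k + 1) * h * Q.coeff (k + 1)) by ring]
  refine this.trans ?_
  have hN : (0 : ℝ) < N := mod_cast hh.pos
  rw [div_le_div_iff₀ (by positivity) (pow_pos (by linarith) _)]
  push_cast
  calc ((M : ℝ) ^ 4) ^ C * (N : ℝ) ^ k ≤ ((M : ℝ) ^ 4) ^ C * (M ^ 4 * (N - h : ℕ)) ^ k := by gcongr
    _ = _ := by rw [mul_pow, pow_add, pow_mul, pow_mul]; ring

lemma exists_near_rational_of_dense {b : ℝ} {k C M N : ℕ} {H : Finset ℕ} (hk : 1 ≤ k) (hM : 2 ≤ M)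
    (hN : M ^ (12 * C + 13 + 4 * k) ≤ N) (hH : H ⊆ range N) (hcard : N ≤ M ^ (4 * C + 4) * #H)
    (hnear : ∀ h ∈ H, ‖((b * h : ℝ) : UnitAddCircle)‖ ≤ (M : ℝ) ^ (4 * C + 4 * k) / (N : ℝ) ^ k) :
    ∃ q, 1 ≤ q ∧ q ≤ M ^ (4 * C + 5) ∧
      ‖((q * b : ℝ) : UnitAddCircle)‖ ≤ (M : ℝ) ^ (16 * C + 16 + 4 * k) / (N : ℝ) ^ (k + 1) := by
  have hM' : (2 : ℝ) ≤ M := mod_cast hM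
  have hM1 : (1 : ℝ) ≤ M := by linarith
  have hN' : (M : ℝ) ^ (12 * C + 13 + 4 * k) ≤ N := mod_cast hN
  have hN1 : (1 : ℝ) ≤ N := (one_le_pow₀ hM1).trans hN'
  have h16 : (16 : ℝ) ≤ M ^ 4 := by
    simpa using (show (16 : ℝ) = 2 ^ 4 by norm_num).trans_le (pow_le_pow_left₀ zero_le_two hM' 4)
  have h24 : (24 : ℝ) ≤ M ^ 5 := by
    rw [pow_succ]; nlinarith
  have hε : (M : ℝ) ^ (4 * C + 4 * k) / (N : ℝ) ^ k * (24 * (M ^ (4 * C + 4) : ℕ) ^ 2) ≤ 1 := by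
    have hNk : (N : ℝ) ≤ N ^ k := le_self_pow₀ hN1 (by omega)
    rw [div_mul_eq_mul_div, div_le_one (by positivity)]
    push_cast
    calc (M : ℝ) ^ (4 * C + 4 * k) * (24 * ((M : ℝ) ^ (4 * C + 4)) ^ 2)
        ≤ (M : ℝ) ^ (4 * C + 4 * k) * ((M : ℝ) ^ 5 * ((M : ℝ) ^ (4 * C + 4)) ^ 2) := by gcongr
      _ = (M : ℝ) ^ (12 * C + 13 + 4 * k) := by ring
      _ ≤ _ := hN'.trans hNk
  have hlong : (16 : ℝ) * ((M : ℝ) ^ (4 * C + 4)) ^ 2 ≤ N := by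
    calc (16 : ℝ) * ((M : ℝ) ^ (4 * C + 4)) ^ 2
        ≤ (M : ℝ) ^ 4 * ((M : ℝ) ^ (4 * C + 4)) ^ 2 := by gcongr
      _ = (M : ℝ) ^ (8 * C + 12) := by ring
      _ ≤ (M : ℝ) ^ (12 * C + 13 + 4 * k) := pow_le_pow_right₀ hM1 (by omega)
      _ ≤ N := hN'
  obtain ⟨q, hq, hqM, hnorm⟩ := exists_norm_mul_le_of_dense (Nat.one_le_pow _ _ (by omega)) hH hcard
    (by positivity) hε (mod_cast hlong) hnear
  refine ⟨q, hq, hqM.trans ?_, hnorm.trans ?_⟩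
  · exact (Nat.mul_le_mul_right _ hM).trans_eq (pow_succ' M (4 * C + 4)).symm
  · rw [mul_div_assoc', div_div, ← pow_succ]
    gcongr
    push_cast
    calc (16 : ℝ) * ((M : ℝ) ^ (4 * C + 4)) ^ 3 * (M : ℝ) ^ (4 * C + 4 * k)
        ≤ (M : ℝ) ^ 4 * ((M : ℝ) ^ (4 * C + 4)) ^ 3 * (M : ℝ) ^ (4 * C + 4 * k) := by gcongr
      _ = _ := by ring

lemma inverseWeyl_succ_succ {k : ℕ} (hk : 1 ≤ k) (ih : InverseWeyl k k) :
    InverseWeyl (k + 1) (k + 1) := by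
  obtain ⟨C, hC⟩ := ih
  refine inverseWeyl_of_large (E := 12 * C + 13 + 4 * k) (C := 16 * C + 17 + 4 * k)
    fun Q hQ M N hM hN hsum => ?_
  have hN1 : 1 ≤ N := (Nat.one_le_pow _ _ (by omega)).trans hN
  obtain ⟨H, hHN, hHcard, hH⟩ := exists_popular_differences hM hN1 hsum
  have hdiff : ∀ h ∈ H, ∃ q ∈ Icc 1 (M ^ (4 * C)),
      ‖((q * (k + 1) * Q.coeff (k + 1) * h : ℝ) : UnitAddCircle)‖ ≤
        (M : ℝ) ^ (4 * C + 4 * k) / (N : ℝ) ^ k := fun h hh => by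
    have hhN := mem_range.mp (hHN hh)
    refine exists_norm_leadingCoeff_mul_le (by omega) hhN (hH h hh) hQ
      (hC _ (natDegree_taylor_sub_self_le hQ h) _ _ (by nlinarith [Nat.pow_le_pow_left hM 4])
        (Nat.sub_pos_of_lt hhN) ?_)
    simp only [eval_sub, taylor_eval]
    push_cast
    refine le_trans (by gcongr; omega) ((hH h hh).trans_eq ?_)
    simp only [Nat.cast_add, add_comm]
  obtain ⟨q, hq, H', hH'H, hH'card, hH'⟩ :=
    exists_common_of_forall_exists (Nat.one_le_pow _ _ (by omega)) hdiff
  obtain ⟨q', hq', hq'M, hnorm⟩ := exists_near_rational_of_dense hk hM hN (hH'H.trans hHN)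
    (hHcard.trans (by rw [pow_add, mul_comm (M ^ (4 * C)), mul_assoc]; gcongr)) hH'
  rw [mem_Icc] at hq
  refine coeffsNearRational_of_leading (q := q' * (q * (k + 1))) hQ
    (Nat.mul_pos hq' (Nat.mul_pos hq.1 k.succ_pos)) ?_ ?_
  · calc q' * (q * (k + 1)) ≤ M ^ (4 * C + 5) * (M ^ (4 * C) * M ^ (k + 1)) := by
          gcongr
          · exact hq.2
          · exact (Nat.lt_pow_self hM).le
      _ = M ^ (8 * C + 6 + k) := by ring
      _ ≤ _ := Nat.pow_le_pow_right (by omega) (by omega)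
  · rw [show ((q' * (q * (k + 1)) : ℕ) : ℝ) * Q.coeff (k + 1) =
      q' * (q * (k + 1) * Q.coeff (k + 1)) by push_cast; ring]
    refine hnorm.trans ?_
    gcongr
    · exact mod_cast (by omega : 1 ≤ M)
    · omega

theorem inverseWeyl_self {k : ℕ} (hk : 1 ≤ k) : InverseWeyl k k :=
  Nat.le_induction inverseWeyl_one_one (fun _ => inverseWeyl_succ_succ) k hk

lemma norm_intCast_mul_le (n : ℤ) (x : ℝ) :
    ‖((n * x : ℝ) : UnitAddCircle)‖ ≤ |(n : ℝ)| * ‖(x : UnitAddCircle)‖ := by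
  rw [← zsmul_eq_mul, AddCircle.coe_zsmul]
  exact norm_zsmul_le n _

lemma norm_natCast_mul_le (n : ℕ) (x : ℝ) :
    ‖((n * x : ℝ) : UnitAddCircle)‖ ≤ n * ‖(x : UnitAddCircle)‖ := by
  simpa using norm_intCast_mul_le n x

lemma norm_coe_sum_le_card_mul {ι : Type*} {s : Finset ι} {f : ι → ℝ} {η : ℝ}
    (h : ∀ i ∈ s, ‖(f i : UnitAddCircle)‖ ≤ η) :
    ‖((∑ i ∈ s, f i : ℝ) : UnitAddCircle)‖ ≤ #s * η := by
  rw [← nsmul_eq_mul, ← sum_const]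
  refine le_of_eq_of_le (congrArg norm ?_) (norm_sum_le_of_le s h)
  exact map_sum (QuotientAddGroup.mk' (AddSubgroup.zmultiples (1 : ℝ))) f s

lemma norm_expSum_add_const (f : ℕ → ℝ) (c : ℝ) (N : ℕ) :
    ‖expSum (fun y => f y + c) N‖ = ‖expSum f N‖ := by
  simp only [expSum, AddChar.map_add_eq_mul, Circle.coe_mul]
  rw [← sum_mul, norm_mul, Circle.norm_coe, mul_one]

lemma norm_expSum_le_add_of_norm_sub_le {f g : ℕ → ℝ} {N : ℕ} {η : ℝ}
    (h : ∀ y < N, ‖((f y - g y : ℝ) : UnitAddCircle)‖ ≤ η) :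
    ‖expSum f N‖ ≤ ‖expSum g N‖ + N * (2 * π * η) := by
  have hterm : ∀ y ∈ range N, ‖(𝐞 (f y) : ℂ) - 𝐞 (g y)‖ ≤ 2 * π * η := fun y hy => by
    have hfactor : (𝐞 (f y) : ℂ) - 𝐞 (g y) = 𝐞 (g y) * (𝐞 (f y - g y) - 1) := by
      rw [mul_sub, ← Circle.coe_mul, ← AddChar.map_add_eq_mul, add_sub_cancel, mul_one]
    rw [hfactor, norm_mul, Circle.norm_coe, one_mul]
    exact (norm_fourierChar_sub_one_le _).trans (by gcongr; exact h y (mem_range.mp hy))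
  have hsum : ‖expSum f N - expSum g N‖ ≤ N * (2 * π * η) := by
    rw [expSum, expSum, ← sum_sub_distrib]
    simpa using norm_sum_le_of_le _ hterm
  linarith [norm_le_norm_add_norm_sub' (expSum f N) (expSum g N)]

lemma norm_expSum_sub_shift_le (f : ℕ → ℝ) (N s : ℕ) :
    ‖expSum f N - expSum (fun y => f (y + s)) N‖ ≤ 2 * s := by
  have hshift : expSum f N - expSum (fun y => f (y + s)) N =
      expSum f s - expSum (fun y => f (N + y)) s := by
    have h₁ := sum_range_add (fun y => (𝐞 (f y) : ℂ)) N s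
    have h₂ := sum_range_add (fun y => (𝐞 (f y) : ℂ)) s N
    simp only [add_comm s] at h₂
    simp only [expSum]
    linear_combination h₂ - h₁
  rw [hshift]
  linarith [norm_sub_le (expSum f s) (expSum (fun y => f (N + y)) s), norm_expSum_le f s,
    norm_expSum_le (fun y => f (N + y)) s]

/-- Averaging over the translates of a progression of step `q` and length `L`. -/
lemma exists_norm_expSum_progression_ge {f : ℕ → ℝ} {M N q L : ℕ} (hN : 1 ≤ N)
    (hf : N ≤ M * ‖expSum f N‖) (hqL : 4 * M * (q * L) ≤ N) :
    ∃ y₀ < N, (L : ℝ) ≤ 2 * M * ‖expSum (fun t => f (y₀ + q * t)) L‖ := by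
  have hdouble : ∑ t ∈ range L, expSum (fun y => f (y + q * t)) N =
      ∑ y ∈ range N, expSum (fun t => f (y + q * t)) L := sum_comm
  have hshift : L * ‖expSum f N‖ ≤ L * (2 * (q * L)) +
      ∑ y ∈ range N, ‖expSum (fun t => f (y + q * t)) L‖ := by
    have hdiff : ‖∑ t ∈ range L, (expSum f N - expSum (fun y => f (y + q * t)) N)‖ ≤
        L * (2 * (q * L)) := by
      refine (norm_sum_le_of_le _ fun t ht => (norm_expSum_sub_shift_le f N (q * t)).trans
        (show _ ≤ (2 * (q * L) : ℝ) from ?_)).trans_eq (by simp)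
      have := (mem_range.mp ht).le
      push_cast
      gcongr
    rw [sum_sub_distrib, sum_const, card_range, nsmul_eq_mul, hdouble] at hdiff
    calc L * ‖expSum f N‖ = ‖L * expSum f N‖ := by simp
      _ ≤ _ := (norm_le_norm_add_norm_sub' _ _).trans (by
        rw [add_comm]; gcongr; exact norm_sum_le _ _)
  obtain ⟨y₀, hy₀, hle⟩ : ∃ y₀ ∈ range N, (L : ℝ) ≤
      2 * M * ‖expSum (fun t => f (y₀ + q * t)) L‖ := by
    refine exists_le_of_sum_le (nonempty_range_iff.mpr (by omega)) ?_
    rw [sum_const, card_range, nsmul_eq_mul, ← mul_sum]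
    have hqL' : (4 * M * (q * L) : ℝ) ≤ N := mod_cast hqL
    have h₁ := mul_le_mul_of_nonneg_left hshift (by positivity : (0 : ℝ) ≤ 2 * M)
    have h₂ := mul_le_mul_of_nonneg_left hf (by positivity : (0 : ℝ) ≤ 2 * L)
    have h₃ := mul_le_mul_of_nonneg_left hqL' (by positivity : (0 : ℝ) ≤ L)
    linarith
  exact ⟨y₀, mem_range.mp hy₀, hle⟩

lemma exists_truncation_on_progression {Q : ℝ[X]} {j k : ℕ} (hjk : j ≤ k) (hQ : Q.natDegree ≤ k)
    (q y₀ : ℝ) :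
    ∃ R : ℝ[X], R.natDegree ≤ j ∧ R.coeff j = q ^ j * Q.coeff j ∧
      ∀ t, Q.eval (y₀ + q * t) = R.eval t + ∑ i ∈ Ioc j k, Q.coeff i * (y₀ + q * t) ^ i := by
  set T : ℝ[X] := ∑ i ∈ range (j + 1), monomial i (Q.coeff i) with hT
  have hdeg : T.natDegree ≤ j := natDegree_sum_le_of_forall_le _ _ fun i hi =>
    (natDegree_monomial_le _).trans (Nat.lt_succ_iff.mp (mem_range.mp hi))
  have hlead : T.coeff j = Q.coeff j := by
    rw [hT, finsetSum_coeff]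
    simp [coeff_monomial]
  refine ⟨(taylor y₀ T).comp (C q * X), ?_, ?_, fun t => ?_⟩
  · refine natDegree_comp_le.trans ?_
    rw [natDegree_taylor]
    exact (Nat.mul_le_mul hdeg ((natDegree_C_mul_le q X).trans natDegree_X_le)).trans_eq (mul_one j)
  · rw [comp_C_mul_X_coeff, coeff_taylor_of_natDegree_le hdeg, hlead, mul_comm]
  · rw [eval_comp, taylor_eval, hT, eval_finsetSum, eval_eq_sum_range' (n := k + 1) (by omega),
      ← sum_range_add_sum_Ico _ (by omega : j + 1 ≤ k + 1)]
    simp only [eval_mul, eval_C, eval_X, eval_monomial, add_comm (q * t)]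
    congr 2
    ext i
    simp only [mem_Ico, mem_Ioc]
    omega

lemma norm_mul_pow_sub_pow_le {c : ℝ} {y₀ q t i N : ℕ} (hq : 1 ≤ q) (hy₀ : y₀ ≤ N)
    (ht : q * t ≤ N) :
    ‖((c * ((y₀ + q * t) ^ i - y₀ ^ i) : ℝ) : UnitAddCircle)‖ ≤
      t * i * (2 * N) ^ (i - 1) * ‖((q * c : ℝ) : UnitAddCircle)‖ := by
  obtain ⟨g, hg⟩ : (q : ℤ) ∣ ((y₀ : ℤ) + q * t) ^ i - (y₀ : ℤ) ^ i :=
    dvd_trans (by simp) (sub_dvd_pow_sub_pow _ _ i)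
  replace hg : ((y₀ : ℝ) + q * t) ^ i - (y₀ : ℝ) ^ i = q * g := mod_cast hg
  have hq0 : (0 : ℝ) < q := mod_cast hq
  have hgle : |(g : ℝ)| ≤ t * i * (2 * N) ^ (i - 1) := by
    have hy₀' : (y₀ : ℝ) ≤ N := mod_cast hy₀
    have ht' : (q * t : ℝ) ≤ N := mod_cast ht
    have hmax : max |(y₀ : ℝ) + q * t| |(y₀ : ℝ)| ≤ 2 * N := by
      rw [abs_of_nonneg (by positivity), abs_of_nonneg (by positivity)]
      exact max_le (by linarith) (by linarith)
    refine le_of_mul_le_mul_left ?_ hq0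
    calc q * |(g : ℝ)| = |((y₀ : ℝ) + q * t) ^ i - (y₀ : ℝ) ^ i| := by
          rw [hg, abs_mul, Nat.abs_cast]
      _ ≤ q * t * i * (2 * N) ^ (i - 1) := by
          refine (abs_pow_sub_pow_le _ _ _).trans ?_
          rw [add_sub_cancel_left, abs_of_nonneg (by positivity)]
          gcongr
      _ = _ := by ring
  rw [hg, show c * (q * g) = g * (q * c) by ring]
  exact (norm_intCast_mul_le _ _).trans (by gcongr)

lemma norm_mul_pow_sub_pow_le_of_near_rational {c : ℝ} {C M N L q y₀ t i k : ℕ} (hM : 2 ≤ M)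
    (hq : 1 ≤ q) (hi : 1 ≤ i) (hik : i ≤ k)
    (hnear : ‖((q * c : ℝ) : UnitAddCircle)‖ ≤ (M : ℝ) ^ C / (N : ℝ) ^ i) (hy₀ : y₀ < N)
    (ht : t < L) (hqL : q * L ≤ N) (hL : M ^ (C + 3 * k + 7) * L ≤ N) :
    ‖((c * ((y₀ + q * t) ^ i - y₀ ^ i) : ℝ) : UnitAddCircle)‖ ≤ 1 / (M : ℝ) ^ (k + 7) := by
  have hN0 : (0 : ℝ) < N := mod_cast hy₀.pos
  have : (0 : ℝ) < M := mod_cast (by omega : 0 < M)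
  have hL' : (M : ℝ) ^ (C + 3 * k + 7) * L ≤ N := mod_cast hL
  have hi2 : (i : ℝ) * 2 ^ (i - 1) ≤ (M : ℝ) ^ (2 * k) := by
    have : i * 2 ^ (i - 1) ≤ M ^ (2 * k) := by
      calc i * 2 ^ (i - 1) ≤ M ^ i * M ^ (i - 1) := by
            gcongr; exact (Nat.lt_pow_self hM).le
        _ = M ^ (i + (i - 1)) := (pow_add _ _ _).symm
        _ ≤ _ := Nat.pow_le_pow_right (by omega) (by omega)
    exact_mod_cast this
  have hpow : (N : ℝ) ^ i = (N : ℝ) ^ (i - 1) * N := by rw [← pow_succ, Nat.sub_add_cancel hi]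
  calc ‖((c * ((y₀ + q * t) ^ i - y₀ ^ i) : ℝ) : UnitAddCircle)‖
      ≤ t * i * (2 * N) ^ (i - 1) * ‖((q * c : ℝ) : UnitAddCircle)‖ :=
        norm_mul_pow_sub_pow_le hq hy₀.le ((Nat.mul_le_mul_left _ ht.le).trans hqL)
    _ ≤ L * i * (2 * N) ^ (i - 1) * ((M : ℝ) ^ C / (N : ℝ) ^ i) := by gcongr
    _ = L * (i * 2 ^ (i - 1)) * (M : ℝ) ^ C / N := by rw [hpow, mul_pow]; field_simp
    _ ≤ L * (M : ℝ) ^ (2 * k) * (M : ℝ) ^ C / N := by gcongr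
    _ ≤ 1 / (M : ℝ) ^ (k + 7) := by
        rw [div_le_div_iff₀ hN0 (by positivity), one_mul]
        exact le_trans (le_of_eq (by ring)) hL'

lemma two_pi_mul_div_pow_le {M n k : ℕ} (hM : 2 ≤ M) (hn : n ≤ k) :
    2 * π * (n * (1 / (M : ℝ) ^ (k + 7))) ≤ 1 / (4 * M) := by
  have hM' : (2 : ℝ) ≤ M := mod_cast hM
  have hnM : (n : ℝ) ≤ (M : ℝ) ^ k := mod_cast hn.trans (Nat.lt_pow_self hM).le
  have h64 : (64 : ℝ) ≤ (M : ℝ) ^ 6 := by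
    simpa using (show (64 : ℝ) = 2 ^ 6 by norm_num).trans_le (pow_le_pow_left₀ zero_le_two hM' 6)
  calc 2 * π * (n * (1 / (M : ℝ) ^ (k + 7)))
      ≤ 2 * 4 * ((M : ℝ) ^ k * (1 / (M : ℝ) ^ (k + 7))) := by gcongr; exact pi_lt_four.le
    _ = 8 / (M ^ 6 * M) := by rw [pow_add]; field_simp; ring
    _ ≤ 8 / (64 * M) := by gcongr
    _ ≤ 1 / (4 * M) := by
        rw [div_le_div_iff₀ (by positivity) (by positivity)]; linarith

/-- Along a progression whose step `q` is the common denominator of the coefficients of degree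
above `j`, these coefficients contribute an almost constant phase. -/
lemma exists_truncation_norm_expSum_ge {Q : ℝ[X]} {C M N L j k q : ℕ} (hM : 2 ≤ M) (hN : 1 ≤ N)
    (hjk : j ≤ k) (hQ : Q.natDegree ≤ k)
    (hsum : N ≤ M * ‖expSum (fun y => Q.eval (y : ℝ)) N‖) (hq : 1 ≤ q) (hqM : q ≤ M ^ C)
    (hnear : ∀ i, j + 1 ≤ i → ‖((q * Q.coeff i : ℝ) : UnitAddCircle)‖ ≤ (M : ℝ) ^ C / (N : ℝ) ^ i)
    (hL : M ^ (C + 3 * k + 7) * L ≤ N) :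
    ∃ R : ℝ[X], R.natDegree ≤ j ∧ R.coeff j = q ^ j * Q.coeff j ∧
      L ≤ M ^ 3 * ‖expSum (fun t => R.eval (t : ℝ)) L‖ := by
  have hqL : 4 * M * (q * L) ≤ N := by
    calc 4 * M * (q * L) ≤ M ^ 2 * M * (M ^ C * L) := by gcongr; nlinarith
      _ = M ^ (C + 3) * L := by ring
      _ ≤ M ^ (C + 3 * k + 7) * L := by gcongr <;> omega
      _ ≤ N := hL
  obtain ⟨y₀, hy₀, hprog⟩ := exists_norm_expSum_progression_ge hN hsum hqL
  obtain ⟨R, hRdeg, hRlead, hReval⟩ := exists_truncation_on_progression hjk hQ q y₀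
  refine ⟨R, hRdeg, hRlead, ?_⟩
  have hphase : ∀ t < L, ‖((Q.eval ((y₀ + q * t : ℕ) : ℝ) -
      (R.eval (t : ℝ) + ∑ i ∈ Ioc j k, Q.coeff i * (y₀ : ℝ) ^ i) : ℝ) : UnitAddCircle)‖ ≤
        #(Ioc j k) * (1 / (M : ℝ) ^ (k + 7)) := by
    intro t ht
    push_cast
    rw [hReval, add_sub_add_left_eq_sub, ← sum_sub_distrib]
    simp only [← mul_sub]
    refine norm_coe_sum_le_card_mul fun i hi => ?_
    rw [mem_Ioc] at hi
    exact norm_mul_pow_sub_pow_le_of_near_rational hM hq (by omega) hi.2 (hnear i hi.1) hy₀ ht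
      (by nlinarith [Nat.zero_le (q * L)]) hL
  have hperturb := norm_expSum_le_add_of_norm_sub_le hphase
  rw [norm_expSum_add_const] at hperturb
  have herror := two_pi_mul_div_pow_le hM (show #(Ioc j k) ≤ k by rw [Nat.card_Ioc]; omega)
  have hM' : (2 : ℝ) ≤ M := mod_cast hM
  have hhalf : 2 * M * (L * (1 / (4 * M))) = (L / 2 : ℝ) := by field_simp; ring
  have : (L : ℝ) ≤ 4 * M * ‖expSum (fun t => R.eval (t : ℝ)) L‖ := by
    have := hprog.trans (mul_le_mul_of_nonneg_left (hperturb.trans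
      (add_le_add_right (mul_le_mul_of_nonneg_left herror (Nat.cast_nonneg L)) _))
      (by positivity))
    linarith
  exact this.trans (by gcongr; nlinarith [pow_le_pow_left₀ zero_le_two hM' 2])

lemma coeffsNearRational_of_truncation {Q R : ℝ[X]} {C C' M N L j k q : ℕ} (hM : 1 ≤ M)
    (hN : 1 ≤ N) (hL : 1 ≤ L) (hj : 1 ≤ j) (hNL : N ≤ M ^ k * L) (hq : 1 ≤ q) (hqM : q ≤ M ^ C)
    (hnear : ∀ i, j + 1 ≤ i → ‖((q * Q.coeff i : ℝ) : UnitAddCircle)‖ ≤ (M : ℝ) ^ C / (N : ℝ) ^ i)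
    (hRlead : R.coeff j = q ^ j * Q.coeff j) (hR : CoeffsNearRational R j C' (M ^ 3) L) :
    CoeffsNearRational Q j (3 * C' + k * j + C * j) M N := by
  obtain ⟨q', hq', hq'M, hR⟩ := hR
  have hM' : (1 : ℝ) ≤ M := mod_cast hM
  rw [← pow_mul] at hq'M
  have hprod : q' * q ^ j ≤ M ^ (3 * C' + C * j) := by
    rw [pow_add, pow_mul M C]
    gcongr
  refine ⟨q' * q ^ j, Nat.mul_pos hq' (pow_pos hq j),
    hprod.trans (Nat.pow_le_pow_right hM (by omega)), fun i hi => ?_⟩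
  rcases hi.eq_or_lt with rfl | hi
  · have hNL' : (N : ℝ) ≤ (M : ℝ) ^ k * L := mod_cast hNL
    have := hR j le_rfl
    rw [hRlead, ← mul_assoc] at this
    push_cast at this ⊢
    refine this.trans ?_
    rw [div_le_div_iff₀ (by positivity) (by positivity), ← pow_mul]
    calc (M : ℝ) ^ (3 * C') * (N : ℝ) ^ j ≤ (M : ℝ) ^ (3 * C') * ((M : ℝ) ^ k * L) ^ j := by gcongr
      _ = (M : ℝ) ^ (3 * C' + k * j) * (L : ℝ) ^ j := by ring
      _ ≤ _ := by
          gcongr ?_ * _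
          exact pow_le_pow_right₀ hM' (Nat.le_add_right _ _)
  · obtain ⟨j, rfl⟩ := Nat.exists_eq_add_of_le' hj
    have hfactor : ((q' * q ^ (j + 1) : ℕ) : ℝ) * Q.coeff i =
        ((q' * q ^ j : ℕ) : ℝ) * (q * Q.coeff i) := by push_cast; ring
    have hsmall : ((q' * q ^ j : ℕ) : ℝ) ≤ (M : ℝ) ^ (3 * C' + C * j) := by
      rw [pow_add, pow_mul _ C]
      exact_mod_cast Nat.mul_le_mul hq'M (Nat.pow_le_pow_left hqM j)
    rw [hfactor]
    calc _ ≤ ((q' * q ^ j : ℕ) : ℝ) * ‖((q * Q.coeff i : ℝ) : UnitAddCircle)‖ :=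
          norm_natCast_mul_le _ _
      _ ≤ (M : ℝ) ^ (3 * C' + C * j) * ((M : ℝ) ^ C / (N : ℝ) ^ i) := by
          gcongr; exact hnear i hi
      _ = (M : ℝ) ^ (3 * C' + C * (j + 1)) / (N : ℝ) ^ i := by ring
      _ ≤ _ := by
          gcongr ?_ / _
          exact pow_le_pow_right₀ hM' (by omega)

lemma inverseWeyl_of_succ {k j : ℕ} (hj : 1 ≤ j) (hjk : j ≤ k) (ih : InverseWeyl k (j + 1)) :
    InverseWeyl k j := by
  obtain ⟨C, hC⟩ := ih
  obtain ⟨C', hC'⟩ := inverseWeyl_self hj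
  set D := C + 3 * k + 7
  refine inverseWeyl_of_large (E := D + 1) (C := 3 * C' + (D + 1) * j + C * j)
    fun Q hQ M N hM hN hsum => ?_
  have hN1 : 1 ≤ N := (Nat.one_le_pow _ _ (by omega)).trans hN
  have hMD : 0 < M ^ D := Nat.pow_pos (by omega)
  obtain ⟨q, hq, hqM, hnear⟩ := hC Q hQ M N hM hN1 hsum
  obtain ⟨L, hLN, hNL⟩ : ∃ L, M ^ D * L ≤ N ∧ N < M ^ D * (L + 1) :=
    ⟨N / M ^ D, Nat.mul_div_le _ _, Nat.lt_mul_div_succ N hMD⟩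
  have hL : 1 ≤ L := by
    have : M ^ D * M < M ^ D * (L + 1) := (pow_succ M D ▸ hN).trans_lt hNL
    have := Nat.lt_of_mul_lt_mul_left this
    omega
  obtain ⟨R, hRdeg, hRlead, hRsum⟩ :=
    exists_truncation_norm_expSum_ge hM hN1 hjk hQ hsum hq hqM hnear hLN
  refine coeffsNearRational_of_truncation (k := D + 1) (by omega) hN1 hL hj ?_ hq hqM hnear hRlead
    (hC' R hRdeg (M ^ 3) L (by nlinarith [Nat.pow_le_pow_left hM 3]) hL (by exact_mod_cast hRsum))
  calc N ≤ M ^ D * (L + 1) := hNL.le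
    _ ≤ M ^ D * (M * L) := by gcongr; nlinarith
    _ = M ^ (D + 1) * L := by ring

theorem inverseWeyl_one (k : ℕ) : InverseWeyl k 1 := by
  have htop : InverseWeyl k (k + 1) :=
    ⟨0, fun Q hQ M N _ _ _ => ⟨1, le_rfl, by simp, fun i hi => by
      rw [coeff_eq_zero_of_natDegree_lt (by omega), mul_zero, AddCircle.coe_zero, norm_zero]
      positivity⟩⟩
  exact Nat.decreasingInduction' (P := InverseWeyl k) (m := 1) (n := k + 1)
    (fun j hjk hj ih => inverseWeyl_of_succ hj (Nat.lt_succ_iff.mp hjk) ih) (by omega) htop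

/-! ### An Erdős–Turán discrepancy bound -/

lemma le_norm_unitAddCircle {u s : ℝ} {n : ℤ} (hl : n + s ≤ u) (hr : u ≤ n + 1 - s) :
    s ≤ ‖(u : UnitAddCircle)‖ := by
  rw [UnitAddCircle.norm_eq]
  rcases le_or_gt (round u) n with h | h
  · have : (round u : ℝ) ≤ n := mod_cast h
    exact le_trans (by linarith) (le_abs_self _)
  · have : (n : ℝ) + 1 ≤ round u := mod_cast h
    exact le_trans (by linarith) (neg_le_abs _)

lemma sum_fourierChar_div_eq_zero {h H : ℕ} (hh : h ∈ Ico 1 H) (c : ℝ) :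
    ∑ j ∈ range H, (𝐞 (h * (c - j / H)) : ℂ) = 0 := by
  rw [mem_Ico] at hh
  have hH : (H : ℝ) ≠ 0 := mod_cast (by omega : H ≠ 0)
  have hlinear : ∑ j ∈ range H, (𝐞 (h * (c - j / H)) : ℂ) =
      expSum (fun j => (-h / H : ℝ) * j + h * c) H :=
    sum_congr rfl fun j _ => by congr 2; ring
  have hprod := expSum_linear_mul_sub_one (-h / H : ℝ) (h * c) H
  have hperiod : (𝐞 (H * (-h / H : ℝ)) : ℂ) = 1 := by
    rw [mul_div_cancel₀ _ hH, Real.fourierChar_apply, Complex.exp_eq_one_iff]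
    exact ⟨-h, by push_cast; ring⟩
  have hne : (𝐞 (-h / H : ℝ) : ℂ) - 1 ≠ 0 := by
    intro h0
    have hnorm := four_mul_norm_le_norm_fourierChar_sub_one (-h / H : ℝ)
    rw [h0, norm_zero] at hnorm
    obtain ⟨n, hn⟩ := (AddCircle.coe_eq_zero_iff _).mp
      (norm_le_zero_iff.mp (by linarith : ‖((-h / H : ℝ) : UnitAddCircle)‖ ≤ 0))
    rw [zsmul_one, eq_div_iff hH] at hn
    have hdvd : (H : ℤ) ∣ h := ⟨-n, by have : n * (H : ℤ) = -h := mod_cast hn; linarith⟩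
    exact Nat.not_dvd_of_pos_of_lt hh.1 hh.2 (mod_cast hdvd)
  rw [hperiod, sub_self, mul_zero] at hprod
  rw [hlinear]
  exact (mul_eq_zero.mp hprod).resolve_right hne

/-- `H` times the Fejér kernel of order `H`. -/
noncomputable def fejerKernel (H : ℕ) (u : ℝ) : ℝ := ‖expSum (fun m => u * m) H‖ ^ 2

lemma fejerKernel_nonneg (H : ℕ) (u : ℝ) : 0 ≤ fejerKernel H u := sq_nonneg _

lemma fejerKernel_le {H : ℕ} {u s : ℝ} (hs : 0 < s) (hu : s ≤ ‖(u : UnitAddCircle)‖) :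
    fejerKernel H u ≤ 1 / (4 * s ^ 2) := by
  calc fejerKernel H u ≤ (1 / (2 * s)) ^ 2 := by
        rw [fejerKernel]; gcongr; exact norm_expSum_linear_le hs hu H
    _ = _ := by ring

lemma fejerKernel_eq (H : ℕ) (u : ℝ) :
    fejerKernel H u = H + 2 * (∑ h ∈ Ico 1 H, (H - h : ℂ) * 𝐞 (h * u)).re := by
  rcases H.eq_zero_or_pos with rfl | hH
  · simp [fejerKernel, expSum]
  have hdiff : ∀ h ∈ range H, expSum (fun y => u * (h + y : ℕ) - u * y) (H - h) =
      (H - h : ℂ) * 𝐞 (h * u) := fun h hh => by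
    have hconst : ∀ y : ℕ, u * (h + y : ℕ) - u * y = h * u := fun y => by push_cast; ring
    simp only [expSum, hconst, sum_const, card_range, nsmul_eq_mul,
      Nat.cast_sub (mem_range.mp hh).le]
  have := norm_expSum_sq_add (fun m => u * m) H
  rw [sum_congr rfl hdiff, range_eq_Ico, sum_eq_sum_Ico_succ_bot hH] at this
  simp only [Nat.cast_zero, sub_zero, zero_mul, AddChar.map_zero_eq_one, Circle.coe_one, mul_one,
    Complex.add_re, Complex.natCast_re, zero_add] at this
  rw [fejerKernel]
  linarith

lemma two_mul_sum_Ico_sub (H : ℕ) : 2 * ∑ h ∈ Ico 1 H, (H - h : ℝ) = H * (H - 1) := by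
  induction H with
  | zero => simp
  | succ H ih =>
    rcases H.eq_zero_or_pos with rfl | hH
    · simp
    have hshift : ∑ h ∈ Ico 1 H, ((H + 1 : ℕ) - h : ℝ) = ∑ h ∈ Ico 1 H, (H - h : ℝ) + (H - 1) := by
      push_cast
      simp only [add_sub_right_comm, sum_add_distrib, sum_const, Nat.card_Ico, nsmul_eq_mul,
        Nat.cast_sub hH, Nat.cast_one, mul_one]
    rw [sum_Ico_succ_top hH, hshift]
    push_cast
    linarith

lemma abs_sum_fejerKernel_sub_le {ι : Type*} {s : Finset ι} {x : ι → ℝ} {H : ℕ} {δ : ℝ}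
    (hδ : ∀ h ∈ Ico 1 H, ‖∑ i ∈ s, (𝐞 (h * x i) : ℂ)‖ ≤ δ) :
    |∑ i ∈ s, fejerKernel H (x i) - H * #s| ≤ H * (H - 1) * δ := by
  have hswap : ∑ i ∈ s, fejerKernel H (x i) - H * #s =
      2 * (∑ h ∈ Ico 1 H, (H - h : ℂ) * ∑ i ∈ s, (𝐞 (h * x i) : ℂ)).re := by
    simp only [fejerKernel_eq, sum_add_distrib, sum_const, nsmul_eq_mul, ← mul_sum,
      mul_comm (#s : ℝ), add_sub_cancel_left, ← Complex.re_sum]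
    rw [sum_comm]
    simp only [mul_sum]
  have hnorm : ∀ h ∈ Ico 1 H, ‖(H - h : ℂ) * ∑ i ∈ s, (𝐞 (h * x i) : ℂ)‖ ≤ (H - h) * δ :=
    fun h hh => by
      have hhH : (h : ℝ) ≤ H := mod_cast (mem_Ico.mp hh).2.le
      have : ‖(H - h : ℂ)‖ = H - h := by
        rw [show (H - h : ℂ) = ((H - h : ℝ) : ℂ) by push_cast; rfl, Complex.norm_real,
          Real.norm_of_nonneg (by linarith)]
      rw [norm_mul, this]
      exact mul_le_mul_of_nonneg_left (hδ h hh) (by linarith)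
  rw [hswap, abs_mul, abs_two, ← two_mul_sum_Ico_sub, mul_assoc, sum_mul]
  gcongr
  exact (Complex.abs_re_le_norm _).trans (norm_sum_le_of_le _ hnorm)

lemma sum_fejerKernel_sub_le {ι : Type*} {s : Finset ι} {x : ι → ℝ} {H : ℕ} {δ : ℝ} (hδ0 : 0 ≤ δ)
    (c : ℝ) (hδ : ∀ h ∈ Ico 1 H, ‖∑ i ∈ s, (𝐞 (h * x i) : ℂ)‖ ≤ δ) :
    ∑ i ∈ s, fejerKernel H (x i - c) ≤ H * #s + H ^ 2 * δ := by
  have hrotate : ∀ h : ℕ, ∑ i ∈ s, (𝐞 (h * (x i - c)) : ℂ) =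
      (∑ i ∈ s, (𝐞 (h * x i) : ℂ)) * 𝐞 (-(h * c)) := fun h => by
    rw [sum_mul]
    refine sum_congr rfl fun i _ => ?_
    rw [mul_sub, sub_eq_add_neg, AddChar.map_add_eq_mul, Circle.coe_mul]
  have hbound := abs_sum_fejerKernel_sub_le (s := s) (x := fun i => x i - c) (H := H) (δ := δ)
    fun h hh => by rw [hrotate, norm_mul, Circle.norm_coe, mul_one]; exact hδ h hh
  nlinarith [(abs_le.mp hbound).2, mul_nonneg (Nat.cast_nonneg (α := ℝ) H) hδ0]

lemma sum_fejerKernel_sub_div (H : ℕ) (c : ℝ) :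
    ∑ j ∈ range H, fejerKernel H (c - j / H) = (H : ℝ) ^ 2 := by
  have := abs_sum_fejerKernel_sub_le (s := range H) (x := fun j => c - j / H) (H := H) (δ := 0)
    fun h hh => by rw [sum_fourierChar_div_eq_zero hh, norm_zero]
  rw [mul_zero, card_range] at this
  linarith [abs_nonpos_iff.mp this]

lemma card_filter_div_le (H : ℕ) {l : ℝ} (hl : 0 ≤ l) :
    (#{j ∈ range H | ((j : ℕ) : ℝ) / H ≤ l} : ℝ) ≤ H * l + 1 := by
  rcases H.eq_zero_or_pos with rfl | hH
  · simp
  have hsub : {j ∈ range H | ((j : ℕ) : ℝ) / H ≤ l} ⊆ range (⌊H * l⌋₊ + 1) := fun j hj => by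
    rw [mem_range, Nat.lt_succ_iff]
    refine Nat.le_floor ?_
    rw [← div_le_iff₀' (by positivity)]
    exact (mem_filter.mp hj).2
  calc (#{j ∈ range H | ((j : ℕ) : ℝ) / H ≤ l} : ℝ) ≤ (⌊H * l⌋₊ + 1 : ℕ) :=
        mod_cast (card_le_card hsub).trans_eq (card_range _)
    _ ≤ H * l + 1 := by push_cast; gcongr; exact Nat.floor_le (by positivity)

/-- The translates of the kernel to the points `a - s + j / H` up to `b + s` carry almost all of
its mass on `[a, b]`. -/
lemma sq_sub_le_sum_fejerKernel {H : ℕ} {a b s u : ℝ} (hs : 0 < s)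
    (hu : Int.fract u ∈ Set.Icc a b) :
    (H : ℝ) ^ 2 - H * (1 / (4 * s ^ 2)) ≤
      ∑ j ∈ range H with ((j : ℕ) : ℝ) / H ≤ b - a + 2 * s,
        fejerKernel H (u - (a - s) - j / H) := by
  have htotal := sum_fejerKernel_sub_div H (u - (a - s))
  rw [← sum_filter_add_sum_filter_not _ fun j : ℕ => (j : ℝ) / H ≤ b - a + 2 * s] at htotal
  have hfar : ∑ j ∈ range H with ¬((j : ℕ) : ℝ) / H ≤ b - a + 2 * s,
      fejerKernel H (u - (a - s) - j / H) ≤ H * (1 / (4 * s ^ 2)) := by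
    refine (sum_le_card_nsmul _ _ (1 / (4 * s ^ 2)) fun j hj => ?_).trans ?_
    · rw [mem_filter, mem_range, not_le] at hj
      have hjH : (j : ℝ) / H < 1 := by
        rw [div_lt_one (mod_cast hj.1.pos)]; exact mod_cast hj.1
      have := Int.floor_add_fract u
      refine fejerKernel_le hs (le_norm_unitAddCircle (n := ⌊u⌋ - 1) ?_ ?_) <;>
        push_cast <;> linarith [hu.1, hu.2]
    · rw [nsmul_eq_mul]
      gcongr
      exact (card_filter_le _ _).trans_eq (card_range H)
  linarith

lemma card_fract_mem_Icc_le {ι : Type*} {S : Finset ι} {x : ι → ℝ} {H : ℕ} {a b s δ : ℝ}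
    (hH : 1 ≤ H) (hs : 0 < s) (hab : a ≤ b) (hδ0 : 0 ≤ δ)
    (hδ : ∀ h ∈ Ico 1 H, ‖∑ i ∈ S, (𝐞 (h * x i) : ℂ)‖ ≤ δ) :
    (#{i ∈ S | Int.fract (x i) ∈ Set.Icc a b} : ℝ) ≤
      #S * (b - a + 2 * s + 1 / H + 1 / (4 * H * s ^ 2)) + H * δ := by
  set T := {i ∈ S | Int.fract (x i) ∈ Set.Icc a b} with hT
  set J := {j ∈ range H | ((j : ℕ) : ℝ) / H ≤ b - a + 2 * s} with hJ
  have hTS : T ⊆ S := filter_subset _ _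
  have hJcard : (#J : ℝ) ≤ H * (b - a + 2 * s) + 1 := card_filter_div_le H (by linarith)
  have hJH : (#J : ℝ) ≤ H := mod_cast (card_filter_le _ _).trans_eq (card_range H)
  have hlower : #T * ((H : ℝ) ^ 2 - H * (1 / (4 * s ^ 2))) ≤
      ∑ i ∈ T, ∑ j ∈ J, fejerKernel H (x i - (a - s) - j / H) := by
    rw [← nsmul_eq_mul]
    exact card_nsmul_le_sum _ _ _ fun i hi => sq_sub_le_sum_fejerKernel hs (mem_filter.mp hi).2
  have htranslate : ∀ j ∈ J,
      ∑ i ∈ S, fejerKernel H (x i - (a - s) - j / H) ≤ H * #S + H ^ 2 * δ := fun j _ => by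
    simpa only [sub_sub] using sum_fejerKernel_sub_le hδ0 (a - s + j / H) hδ
  have hupper : ∑ i ∈ T, ∑ j ∈ J, fejerKernel H (x i - (a - s) - j / H) ≤
      (H * (b - a + 2 * s) + 1) * (H * #S) + H * (H ^ 2 * δ) := by
    calc _ ≤ ∑ i ∈ S, ∑ j ∈ J, fejerKernel H (x i - (a - s) - j / H) :=
          sum_le_sum_of_subset_of_nonneg hTS fun _ _ _ =>
            sum_nonneg fun _ _ => fejerKernel_nonneg _ _
      _ ≤ #J * (H * #S + H ^ 2 * δ) := by
          rw [sum_comm, ← nsmul_eq_mul]; exact sum_le_card_nsmul _ _ _ htranslate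
      _ ≤ _ := by rw [mul_add]; gcongr
  have htrivial : #T * (H * (1 / (4 * s ^ 2))) ≤ #S * (H * (1 / (4 * s ^ 2))) := by gcongr
  refine le_of_mul_le_mul_right ?_ (by positivity : 0 < (H : ℝ) ^ 2)
  have hexpand : (#S * (b - a + 2 * s + 1 / H + 1 / (4 * H * s ^ 2)) + H * δ) * (H : ℝ) ^ 2 =
      (H * (b - a + 2 * s) + 1) * (H * #S) + H * (H ^ 2 * δ) + #S * (H * (1 / (4 * s ^ 2))) := by
    field_simp
    ring
  linarith

lemma card_fract_mem_Icc_le_of_norm_sum_le {ι : Type*} {S : Finset ι} {x : ι → ℝ} {B : ℕ} {a b : ℝ}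
    (hB : 1 ≤ B) (hab : a ≤ b)
    (hS : ∀ h ∈ Ico 1 (B ^ 3), ‖∑ i ∈ S, (𝐞 (h * x i) : ℂ)‖ ≤ #S / (B : ℝ) ^ 4) :
    (#{i ∈ S | Int.fract (x i) ∈ Set.Icc a b} : ℝ) ≤ #S * (b - a + 5 / B) := by
  have hB' : (1 : ℝ) ≤ B := mod_cast hB
  refine (card_fract_mem_Icc_le (s := 1 / (B : ℝ)) (Nat.one_le_pow _ _ hB) (by positivity) hab
    (by positivity) hS).trans ?_
  have hsq : 1 / (B : ℝ) ^ 2 ≤ 1 := by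
    rw [div_le_one (by positivity)]; exact one_le_pow₀ hB'
  calc _ = #S * (b - a + (13 / 4 + 1 / (B : ℝ) ^ 2) / B) := by push_cast; field_simp; ring
    _ ≤ _ := by gcongr; linarith

theorem abs_card_fract_lt_sub_le {ι : Type*} {S : Finset ι} {x : ι → ℝ} {B : ℕ} {t : ℝ}
    (hB : 1 ≤ B) (ht0 : 0 ≤ t) (ht1 : t ≤ 1)
    (hS : ∀ h ∈ Ico 1 (B ^ 3), ‖∑ i ∈ S, (𝐞 (h * x i) : ℂ)‖ ≤ #S / (B : ℝ) ^ 4) :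
    |(#{i ∈ S | Int.fract (x i) < t} : ℝ) - #S * t| ≤ 5 * #S / B := by
  have hbelow := card_fract_mem_Icc_le_of_norm_sum_le hB ht0 hS
  have habove := card_fract_mem_Icc_le_of_norm_sum_le hB ht1 hS
  have hbelow' : (#{i ∈ S | Int.fract (x i) < t} : ℝ) ≤
      #{i ∈ S | Int.fract (x i) ∈ Set.Icc 0 t} := by
    gcongr with i _
    exact fun h => ⟨Int.fract_nonneg _, h.le⟩
  have habove' : (#{i ∈ S | ¬Int.fract (x i) < t} : ℝ) ≤
      #{i ∈ S | Int.fract (x i) ∈ Set.Icc t 1} := by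
    gcongr with i _
    exact fun h => ⟨not_lt.mp h, (Int.fract_lt_one _).le⟩
  have hsplit : (#{i ∈ S | Int.fract (x i) < t} : ℝ) + #{i ∈ S | ¬Int.fract (x i) < t} = #S := by
    exact_mod_cast card_filter_add_card_filter_not _
  rw [mul_div_right_comm, mul_comm _ (#S : ℝ), abs_le]
  constructor <;> linarith

/-! ### Equidistribution of `⌊P(x)⌋` modulo `d` -/

lemma exists_one_lt_norm_mul_pow {α : ℝ} (hα : ¬IsLiouvilleNumber α) :
    ∃ n : ℕ, ∀ q : ℕ, 1 ≤ q → 1 < ‖((q * α : ℝ) : UnitAddCircle)‖ * (2 * q : ℝ) ^ n := by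
  simp only [IsLiouvilleNumber, not_forall, not_exists, not_and, not_le] at hα
  obtain ⟨n, hn⟩ := hα
  refine ⟨n, fun q hq => ?_⟩
  have hq' : (1 : ℝ) ≤ q := mod_cast hq
  -- Doubling numerator and denominator makes `q = 1` an admissible denominator.
  have hfar := hn (2 * round (q * α)) (2 * q) (by omega)
  push_cast at hfar
  rw [zpow_neg, zpow_natCast, inv_lt_iff_one_lt_mul₀' (by positivity)] at hfar
  rw [UnitAddCircle.norm_eq, mul_comm]
  refine hfar.trans_le (mul_le_mul_of_nonneg_left ?_ (by positivity))
  rw [show α - 2 * round (q * α) / (2 * q) = (q * α - round (q * α)) / q by field_simp, abs_div,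
    Nat.abs_cast]
  exact div_le_self (abs_nonneg _) hq'

lemma natDegree_C_mul_comp_C_mul_X_le (P : ℝ[X]) (a b : ℝ) :
    (C a * P.comp (C b * X)).natDegree ≤ P.natDegree := calc
  (C a * P.comp (C b * X)).natDegree ≤ P.natDegree * (C b * X).natDegree :=
    (natDegree_C_mul_le _ _).trans natDegree_comp_le
  _ ≤ P.natDegree * 1 := by gcongr; compute_degree
  _ = P.natDegree := mul_one _

lemma norm_expSum_dilate_le {P : ℝ[X]} (hP : ¬IsLiouvilleNumber (P.coeff 1)) :
    ∃ K : ℕ, ∀ B d N : ℕ, 2 ≤ B → 1 ≤ d → B ^ K ≤ N → ∀ h ∈ Ico 1 (B ^ 3),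
      ‖expSum (fun y => h * (P.eval (d * y : ℝ) / d)) N‖ ≤ N / (B : ℝ) ^ 4 := by
  obtain ⟨n, hn⟩ := exists_one_lt_norm_mul_pow hP
  obtain ⟨c, hc⟩ := inverseWeyl_one P.natDegree
  refine ⟨4 * c + (4 * c + 4) * n, fun B d N hB hd hN h hh => ?_⟩
  rw [mem_Ico] at hh
  by_contra! hlarge
  have hN1 : 1 ≤ N := (Nat.one_le_pow _ _ (by omega)).trans hN
  have hd' : (d : ℝ) ≠ 0 := mod_cast (by omega : d ≠ 0)
  set Q : ℝ[X] := C (h / d : ℝ) * P.comp (C (d : ℝ) * X) with hQ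
  have heval : ∀ y : ℕ, Q.eval (y : ℝ) = h * (P.eval (d * y : ℝ) / d) := fun y => by
    simp only [hQ, eval_mul, eval_C, eval_comp, eval_X]
    ring
  have hcoeff : Q.coeff 1 = h * P.coeff 1 := by
    rw [hQ, coeff_C_mul, comp_C_mul_X_coeff]
    field_simp
  have hlarge' : N ≤ (B ^ 4 : ℕ) * ‖expSum (fun y => Q.eval (y : ℝ)) N‖ := by
    simp only [heval]
    push_cast
    exact ((div_lt_iff₀' (by positivity)).mp hlarge).le
  obtain ⟨q, hq, hqB, hnear⟩ :=
    hc Q (natDegree_C_mul_comp_C_mul_X_le _ _ _) (B ^ 4) N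
      (hB.trans (Nat.le_self_pow (by norm_num) B)) hN1 hlarge'
  have hlinear := hnear 1 le_rfl
  have hfar := hn (q * h) (Nat.mul_pos hq hh.1)
  rw [hcoeff, ← mul_assoc, pow_one] at hlinear
  push_cast at hlinear hfar
  have hqh : 2 * (q * h) ≤ B ^ (4 * c + 4) := calc
    2 * (q * h) ≤ B * ((B ^ 4) ^ c * B ^ 3) := by gcongr; exact hh.2.le
    _ = B ^ (4 * c + 4) := by ring
  refine hfar.not_ge ?_
  calc ‖((q * h * P.coeff 1 : ℝ) : UnitAddCircle)‖ * (2 * (q * h) : ℝ) ^ n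
      ≤ ((B : ℝ) ^ 4) ^ c / N * ((B : ℝ) ^ (4 * c + 4)) ^ n := by
        gcongr; exact_mod_cast hqh
    _ = (B : ℝ) ^ (4 * c + (4 * c + 4) * n) / N := by ring
    _ ≤ 1 := by rw [div_le_one (by positivity)]; exact_mod_cast hN

lemma natCast_dvd_floor_iff {d : ℕ} (hd : 1 ≤ d) (x : ℝ) :
    (d : ℤ) ∣ ⌊x⌋ ↔ Int.fract (x / d) < 1 / d := by
  have hd' : (0 : ℝ) < d := mod_cast hd
  have hfract : Int.fract (x / d) < 1 / d ↔ x < d * ⌊x / d⌋ + 1 := by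
    rw [Int.fract, lt_div_iff₀ hd', sub_mul, div_mul_cancel₀ _ hd'.ne', sub_lt_iff_lt_add',
      mul_comm (d : ℝ)]
  have hlower : d * (⌊x / d⌋ : ℝ) ≤ x := (le_div_iff₀' hd').mp (Int.floor_le _)
  rw [hfract]
  constructor
  · rintro ⟨n, hn⟩
    obtain ⟨hnx, hxn⟩ := Int.floor_eq_iff.mp hn
    push_cast at hnx hxn
    have : (n : ℝ) ≤ ⌊x / d⌋ := mod_cast Int.le_floor.mpr ((le_div_iff₀' hd').mpr hnx)
    nlinarith
  · exact fun h => ⟨⌊x / d⌋, Int.floor_eq_iff.mpr ⟨mod_cast hlower, mod_cast h⟩⟩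

lemma exists_abs_card_dvd_floor_sub_le {P : ℝ[X]} (hP : ¬IsLiouvilleNumber (P.coeff 1)) :
    ∃ K : ℕ, ∀ B d N : ℕ, 2 ≤ B → 1 ≤ d → B ^ K ≤ N →
      |(#{y ∈ range N | (d : ℤ) ∣ ⌊P.eval (d * (y : ℕ) : ℝ)⌋} : ℝ) - N / d| ≤ 5 * N / B := by
  obtain ⟨K, hK⟩ := norm_expSum_dilate_le hP
  refine ⟨K, fun B d N hB hd hN => ?_⟩
  have hd' : (1 : ℝ) ≤ d := mod_cast hd
  have := abs_card_fract_lt_sub_le (S := range N) (x := fun y : ℕ => P.eval (d * y : ℝ) / d)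
    (t := 1 / d) (by omega : 1 ≤ B) (by positivity) (div_le_one_of_le₀ hd' (by positivity))
    fun h hh => by rw [card_range]; exact hK B d N hB hd hN h hh
  simpa only [natCast_dvd_floor_iff hd, card_range, mul_one_div] using this

lemma abs_card_AP_sub_card_le (P : ℝ[X]) {d : ℕ} (hd : 1 ≤ d) (X : ℝ) :
    |(#(AP P d X) : ℝ) -
      #{y ∈ range (⌊X⌋₊ / d + 1) | (d : ℤ) ∣ ⌊P.eval (d * (y : ℕ) : ℝ)⌋}| ≤ 1 := by
  set F := {y ∈ range (⌊X⌋₊ / d + 1) | (d : ℤ) ∣ ⌊P.eval (d * (y : ℕ) : ℝ)⌋} with hF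
  have himage : AP P d X = (F.erase 0).image (d * ·) := by
    ext x
    simp only [AP, hF, mem_filter, mem_Icc, mem_image, mem_erase, mem_range, Nat.lt_succ_iff,
      Nat.le_div_iff_mul_le hd]
    constructor
    · rintro ⟨⟨hx, hxX⟩, hdx, hdP⟩
      obtain ⟨y, rfl⟩ := Int.natCast_dvd_natCast.mp hdx
      exact ⟨y, ⟨(Nat.pos_of_mul_pos_left hx).ne', by rwa [mul_comm], mod_cast hdP⟩, rfl⟩
    · rintro ⟨y, ⟨hy, hyX, hdP⟩, rfl⟩
      exact ⟨⟨Nat.mul_pos hd (Nat.pos_of_ne_zero hy), by rwa [mul_comm]⟩,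
        Int.natCast_dvd_natCast.mpr (dvd_mul_right d y), mod_cast hdP⟩
  have hcard : #(AP P d X) = #(F.erase 0) := by
    rw [himage, card_image_of_injective _ (mul_right_injective₀ (by omega))]
  have hle : (#(F.erase 0) : ℝ) ≤ #F := mod_cast card_erase_le
  have hge : (#F : ℝ) ≤ #(F.erase 0) + 1 := by
    have := pred_card_le_card_erase (a := 0) (s := F)
    exact_mod_cast (by omega : #F ≤ #(F.erase 0) + 1)
  rw [hcard, abs_le]
  constructor <;> linarith

lemma lt_natFloor_div_add_one_le {X : ℝ} (hX : 0 ≤ X) (d : ℕ) :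
    X / d < (⌊X⌋₊ / d + 1 : ℕ) ∧ ((⌊X⌋₊ / d + 1 : ℕ) : ℝ) ≤ X / d + 1 := by
  rw [← Nat.floor_div_natCast, Nat.cast_add_one]
  exact ⟨Nat.lt_floor_add_one _, by gcongr; exact Nat.floor_le (by positivity)⟩

lemma exists_abs_card_AP_sub_le {P : ℝ[X]} (hP : ¬IsLiouvilleNumber (P.coeff 1)) :
    ∃ K : ℕ, ∀ X z : ℝ, 2 ≤ z → z ^ K ≤ X → ∀ d : ℕ, 1 ≤ d → (d : ℝ) ≤ z →
      |(#(AP P d X) : ℝ) - X / (d : ℝ) ^ 2| ≤ 12 * X / z ^ 2 := by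
  obtain ⟨K, hK⟩ := exists_abs_card_dvd_floor_sub_le hP
  refine ⟨3 * K + 2, fun X z hz hzX d hd hdz => ?_⟩
  have hd' : (1 : ℝ) ≤ d := mod_cast hd
  have hzX' : z ^ 2 ≤ X := (pow_le_pow_right₀ (by linarith) (by omega)).trans hzX
  have hX : 1 ≤ X := by nlinarith
  set B := ⌈z ^ 2⌉₊
  have hzB : z ^ 2 ≤ B := Nat.le_ceil _
  have hBz : (B : ℝ) ≤ z ^ 3 := by nlinarith [Nat.ceil_lt_add_one (a := z ^ 2) (by positivity)]
  have hB2 : 2 ≤ B := by exact_mod_cast (by nlinarith : (2 : ℝ) ≤ B)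
  set N := ⌊X⌋₊ / d + 1
  have hNX : X / d < N ∧ N ≤ X / d + 1 := lt_natFloor_div_add_one_le (by positivity) d
  have hBN : B ^ K ≤ N := by
    have : (B : ℝ) ^ K ≤ X / d := by
      rw [le_div_iff₀ (by positivity)]
      calc (B : ℝ) ^ K * d ≤ (z ^ 3) ^ K * z := by gcongr
        _ = z ^ (3 * K + 1) := by ring
        _ ≤ z ^ (3 * K + 2) := pow_le_pow_right₀ (by linarith) (by omega)
        _ ≤ X := hzX
    exact_mod_cast this.trans hNX.1.le
  have hNd : |(N : ℝ) / d - X / (d : ℝ) ^ 2| ≤ 1 := by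
    rw [show (N : ℝ) / d - X / (d : ℝ) ^ 2 = (N - X / d) / d by field_simp, abs_div, Nat.abs_cast,
      abs_of_pos (by linarith), div_le_one (by positivity)]
    linarith
  have hdiscrepancy : 5 * (N : ℝ) / B ≤ 10 * X / z ^ 2 := by
    have : 5 * (N : ℝ) ≤ 10 * X := by linarith [div_le_self (by linarith : 0 ≤ X) hd']
    gcongr
  have hone : 1 ≤ X / z ^ 2 := by rwa [one_le_div (by positivity)]
  calc _ ≤ _ := abs_sub_le _ (#{y ∈ range N | (d : ℤ) ∣ ⌊P.eval (d * (y : ℕ) : ℝ)⌋} : ℝ) _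
    _ ≤ 1 + (10 * X / z ^ 2 + 1) := by
        gcongr
        · exact abs_card_AP_sub_card_le P hd X
        · exact (abs_sub_le _ (N / d : ℝ) _).trans
            (add_le_add ((hK B d N hB2 hd hBN).trans hdiscrepancy) hNd)
    _ ≤ 12 * X / z ^ 2 := by linarith [mul_div_assoc 12 X (z ^ 2), mul_div_assoc 10 X (z ^ 2)]

/-! ### The sieve -/

section Sieve

open ArithmeticFunction
open scoped ArithmeticFunction.Moebius

variable {ι : Type*} {s : Finset ι} {g : ι → ℕ}

lemma card_filter_coprime_eq_sum_moebius {W : ℕ} (hW : W ≠ 0) :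
    (#{i ∈ s | (g i).Coprime W} : ℝ) = ∑ d ∈ W.divisors, (μ d : ℝ) * #{i ∈ s | d ∣ g i} := by
  have hindicator : ∀ i ∈ s, (if (g i).Coprime W then (1 : ℝ) else 0) =
      ∑ d ∈ W.divisors, if d ∣ g i then (μ d : ℝ) else 0 := by
    intro i _
    have hsum : ∑ d ∈ ((g i).gcd W).divisors, μ d = if (g i).gcd W = 1 then 1 else 0 := by
      rw [← coe_mul_zeta_apply, moebius_mul_coe_zeta, one_apply]
    have hdivisors : ((g i).gcd W).divisors = {d ∈ W.divisors | d ∣ g i} := by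
      ext d
      simp only [Nat.mem_divisors, mem_filter, Nat.dvd_gcd_iff, ne_eq, Nat.gcd_eq_zero_iff, hW,
        and_false, not_false_eq_true, and_true, and_comm (a := d ∣ g i)]
    rw [hdivisors] at hsum
    rw [← sum_filter]
    exact_mod_cast hsum.symm
  rw [card_filter, Nat.cast_sum]
  push_cast
  rw [sum_congr rfl hindicator, sum_comm]
  refine sum_congr rfl fun d _ => ?_
  rw [← sum_filter, sum_const, nsmul_eq_mul, mul_comm]

lemma hasSum_moebius_div_sq : HasSum (fun d : ℕ => (μ d : ℝ) / (d : ℝ) ^ 2) (π ^ 2 / 6)⁻¹ := by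
  have hs : 1 < (2 : ℂ).re := by norm_num
  have hvalue : LSeries (fun n => (μ n : ℂ)) 2 = (π ^ 2 / 6 : ℂ)⁻¹ := by
    have := LSeries_zeta_mul_Lseries_moebius hs
    rw [LSeries_zeta_eq_riemannZeta hs, riemannZeta_two] at this
    exact eq_inv_of_mul_eq_one_right this
  have hseries := (LSeriesSummable_moebius_iff.mpr hs).LSeriesHasSum
  rw [LSeriesHasSum, hvalue] at hseries
  rw [← Complex.hasSum_ofReal]
  push_cast
  refine hseries.congr_fun fun d => ?_
  rcases eq_or_ne d 0 with rfl | hd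
  · simp
  · rw [LSeries.term_of_ne_zero hd]
    norm_cast

lemma abs_moebius_div_sq_le (d : ℕ) : |(μ d : ℝ) / (d : ℝ) ^ 2| ≤ ((d : ℝ) ^ 2)⁻¹ := by
  rw [abs_div, abs_sq, ← one_div]
  gcongr
  exact_mod_cast abs_moebius_le_one (n := d)

lemma abs_sum_moebius_div_sq_sub_le (w : ℕ) :
    |∑ d ∈ (primorial w).divisors, (μ d : ℝ) / (d : ℝ) ^ 2 - (π ^ 2 / 6)⁻¹| ≤ 2 / (w + 1) := by
  refine le_of_tendsto (hasSum_moebius_div_sq.tendsto_sum_nat.const_sub _).abs ?_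
  filter_upwards [Filter.eventually_gt_atTop (primorial w)] with M hM
  have hsub : (primorial w).divisors ⊆ range M := fun d hd =>
    mem_range.mpr ((Nat.divisor_le hd).trans_lt hM)
  have hzero : ∀ d ∈ range M \ (primorial w).divisors, d ∉ Ioo w M →
      |(μ d : ℝ) / (d : ℝ) ^ 2| = 0 := by
    intro d hd hdw
    rw [mem_sdiff, mem_range] at hd
    have hle : d ≤ w := by by_contra! h; exact hdw (mem_Ioo.mpr ⟨h, hd.1⟩)
    have hsquarefree : ¬Squarefree d := fun h => hd.2 <| Nat.mem_divisors.mpr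
      ⟨h.dvd_primorial.trans (primorial_dvd_primorial hle), primorial_ne_zero w⟩
    rw [moebius_eq_zero_of_not_squarefree hsquarefree, Int.cast_zero, zero_div, abs_zero]
  rw [← sum_sdiff hsub, abs_sub_comm, add_sub_cancel_right]
  calc |∑ d ∈ range M \ (primorial w).divisors, (μ d : ℝ) / (d : ℝ) ^ 2|
      ≤ ∑ d ∈ range M \ (primorial w).divisors, |(μ d : ℝ) / (d : ℝ) ^ 2| :=
        abs_sum_le_sum_abs _ _
    _ ≤ ∑ d ∈ Ioo w M, |(μ d : ℝ) / (d : ℝ) ^ 2| :=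
        (sum_filter_of_ne fun d hd hne => not_imp_comm.mp (hzero d hd) hne).ge.trans
          (sum_le_sum_of_subset_of_nonneg (fun d hd => (mem_filter.mp hd).2) fun _ _ _ =>
            abs_nonneg _)
    _ ≤ ∑ d ∈ Ioo w M, ((d : ℝ) ^ 2)⁻¹ := sum_le_sum fun d _ => abs_moebius_div_sq_le d
    _ ≤ 2 / (w + 1) := sum_Ioo_inv_sq_le w M

lemma abs_card_coprime_sub_le {W : ℕ} (hW : W ≠ 0) {X E : ℝ}
    (h : ∀ d ∈ W.divisors, |(#{i ∈ s | d ∣ g i} : ℝ) - X / (d : ℝ) ^ 2| ≤ E) :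
    |(#{i ∈ s | (g i).Coprime W} : ℝ) - X * ∑ d ∈ W.divisors, (μ d : ℝ) / (d : ℝ) ^ 2| ≤
      #W.divisors * E := by
  rw [card_filter_coprime_eq_sum_moebius hW, mul_sum, ← sum_sub_distrib, ← nsmul_eq_mul]
  refine (abs_sum_le_sum_abs _ _).trans (sum_le_card_nsmul _ _ _ fun d hd => ?_)
  rw [show (μ d : ℝ) * #{i ∈ s | d ∣ g i} - X * (μ d / (d : ℝ) ^ 2) =
    μ d * (#{i ∈ s | d ∣ g i} - X / (d : ℝ) ^ 2) by ring, abs_mul]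
  have hμ : |(μ d : ℝ)| ≤ 1 := mod_cast abs_moebius_le_one (n := d)
  exact (mul_le_of_le_one_left (abs_nonneg _) hμ).trans (h d hd)

lemma coprime_primorial_iff {n v : ℕ} :
    n.Coprime (primorial v) ↔ ∀ p : ℕ, p.Prime → p ≤ v → ¬p ∣ n := by
  rw [← not_iff_not, Nat.Prime.not_coprime_iff_dvd]
  push Not
  refine exists_congr fun p => and_congr_right fun hp => ?_
  rw [hp.dvd_primorial_iff, and_comm]

lemma card_coprime_primorial_le (w v : ℕ) :
    #{i ∈ s | (g i).Coprime (primorial w)} ≤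
      #{i ∈ s | (g i).Coprime (primorial v)} + ∑ p ∈ Ioc w v, #{i ∈ s | p ∣ g i} := by
  classical
  have hcover : {i ∈ s | (g i).Coprime (primorial w)} ⊆
      {i ∈ s | (g i).Coprime (primorial v)} ∪ (Ioc w v).biUnion fun p => {i ∈ s | p ∣ g i} := by
    intro i
    simp only [mem_union, mem_filter, mem_biUnion, mem_Ioc, coprime_primorial_iff]
    rintro ⟨hi, hw⟩
    by_contra! hcon
    obtain ⟨p, hp, hpv, hpg⟩ := hcon.1 hi
    have hwp : w < p := by by_contra! h; exact hw p hp h hpg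
    exact hcon.2 p ⟨hwp, hpv⟩ hi hpg
  exact (card_le_card hcover).trans ((card_union_le _ _).trans (by gcongr; exact card_biUnion_le))

lemma sum_Ioc_card_dvd_le {w v : ℕ} {X E : ℝ} (hX : 0 ≤ X) (hE : 0 ≤ E)
    (h : ∀ d ∈ Ioc w v, |(#{i ∈ s | d ∣ g i} : ℝ) - X / (d : ℝ) ^ 2| ≤ E) :
    ∑ p ∈ Ioc w v, (#{i ∈ s | p ∣ g i} : ℝ) ≤ X * (2 / (w + 1)) + v * E := by
  have hterm : ∀ p ∈ Ioc w v, (#{i ∈ s | p ∣ g i} : ℝ) ≤ X * ((p : ℝ) ^ 2)⁻¹ + E := fun p hp => by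
    have := (abs_le.mp (h p hp)).2
    rw [div_eq_mul_inv] at this
    linarith
  have hsq : ∑ p ∈ Ioc w v, ((p : ℝ) ^ 2)⁻¹ ≤ 2 / (w + 1) := by
    have : Ioc w v = Ioo w (v + 1) := by ext; simp only [mem_Ioc, mem_Ioo, Nat.lt_succ_iff]
    rw [this]
    exact sum_Ioo_inv_sq_le w (v + 1)
  calc _ ≤ X * ∑ p ∈ Ioc w v, ((p : ℝ) ^ 2)⁻¹ + (v - w : ℕ) * E := by
        refine (sum_le_sum hterm).trans_eq ?_
        rw [sum_add_distrib, ← mul_sum, sum_const, nsmul_eq_mul, Nat.card_Ioc]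
    _ ≤ _ := by gcongr; exact Nat.sub_le v w

theorem abs_card_coprime_primorial_sub_le {w v : ℕ} {X E : ℝ} (hX : 0 ≤ X) (hwv : 4 ^ w ≤ v)
    (h : ∀ d ∈ Icc 1 v, |(#{i ∈ s | d ∣ g i} : ℝ) - X / (d : ℝ) ^ 2| ≤ E) :
    |(#{i ∈ s | (g i).Coprime (primorial v)} : ℝ) - X / (π ^ 2 / 6)| ≤
      4 * X / (w + 1) + 2 * v * E := by
  have hprimorial : primorial w ≤ v := (primorial_le_four_pow w).trans hwv
  have hwv' : w ≤ v := (Nat.lt_pow_self (by norm_num)).le.trans hwv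
  have hE : 0 ≤ E := (abs_nonneg _).trans
    (h 1 (mem_Icc.mpr ⟨le_rfl, (Nat.one_le_pow _ _ (by norm_num)).trans hwv⟩))
  have hsmall := abs_card_coprime_sub_le (s := s) (g := g) (primorial_ne_zero w) (X := X) (E := E)
    fun d hd => h d (mem_Icc.mpr ⟨Nat.pos_of_mem_divisors hd, (Nat.divisor_le hd).trans hprimorial⟩)
  have hdivisors : (#(primorial w).divisors : ℝ) * E ≤ v * E := by
    gcongr
    exact (Nat.card_divisors_le_self _).trans hprimorial
  have hmain : |X * ∑ d ∈ (primorial w).divisors, (μ d : ℝ) / (d : ℝ) ^ 2 - X / (π ^ 2 / 6)| ≤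
      X * (2 / (w + 1)) := by
    rw [div_eq_mul_inv X, ← mul_sub, abs_mul, abs_of_nonneg hX]
    gcongr
    exact abs_sum_moebius_div_sq_sub_le w
  have hle : (#{i ∈ s | (g i).Coprime (primorial v)} : ℝ) ≤
      #{i ∈ s | (g i).Coprime (primorial w)} := by
    gcongr
    exact fun hi => hi.coprime_dvd_right (primorial_dvd_primorial hwv')
  have hge : (#{i ∈ s | (g i).Coprime (primorial w)} : ℝ) ≤
      #{i ∈ s | (g i).Coprime (primorial v)} + ∑ p ∈ Ioc w v, (#{i ∈ s | p ∣ g i} : ℝ) :=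
    mod_cast card_coprime_primorial_le w v
  have hlarge := sum_Ioc_card_dvd_le (s := s) (g := g) (w := w) (v := v) hX hE fun d hd =>
    h d (mem_Icc.mpr ⟨(Nat.zero_le w).trans_lt (mem_Ioc.mp hd).1, (mem_Ioc.mp hd).2⟩)
  have hsplit : 4 * X / (w + 1) = X * (2 / (w + 1)) + X * (2 / (w + 1)) := by ring
  have : 0 ≤ X * (2 / (w + 1 : ℝ)) := by positivity
  rw [abs_le] at *
  constructor <;> linarith [hsmall.1, hsmall.2, hmain.1, hmain.2, mul_nonneg v.cast_nonneg hE]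

end Sieve

lemma Pz_eq_primorial (z : ℝ) : Pz z = primorial (⌈z⌉₊ - 1) := by
  rw [Pz, primorial_eq_prod_primesLE]
  congr 1
  ext p
  simp only [primesLt, mem_filter, mem_range, Nat.lt_ceil, Nat.mem_primesLE]
  constructor
  · rintro ⟨hpz, hp, -⟩
    exact ⟨Nat.le_sub_one_of_lt (Nat.lt_ceil.mpr hpz), hp⟩
  · rintro ⟨hpz, hp⟩
    have : (p : ℝ) < z := Nat.lt_ceil.mp (by have := hp.pos; omega)
    exact ⟨this, hp, this⟩

lemma AP_eq_filter_dvd_gcd (P : ℝ[X]) (d : ℕ) (X : ℝ) :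
    AP P d X = {x ∈ Icc 1 ⌊X⌋₊ | d ∣ Int.gcd (x : ℕ) ⌊P.eval ((x : ℕ) : ℝ)⌋} := by
  ext x
  simp only [AP, mem_filter, Int.dvd_gcd_iff]

/-- In the definition of `S2` the bound variable ranges over `ℤ`, so that the finset filtered there
is the image of `Icc 1 ⌊X⌋₊` under the cast. -/
lemma S2_eq_card_filter_coprime (P : ℝ[X]) (X z : ℝ) :
    S2 P X z = #{x ∈ Icc 1 ⌊X⌋₊ | (Int.gcd (x : ℕ) ⌊P.eval ((x : ℕ) : ℝ)⌋).Coprime (Pz z)} := by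
  rw [← card_image_of_injective _ (Nat.cast_injective (R := ℤ)), S2]
  congr 1
  ext x
  simp only [mem_filter, mem_image, Finset.bind_def, Finset.pure_def, mem_sup, mem_singleton]
  constructor
  · rintro ⟨⟨y, hy, rfl⟩, h⟩
    exact ⟨y, ⟨hy, by simpa using h⟩, rfl⟩
  · rintro ⟨y, ⟨hy, h⟩, rfl⟩
    exact ⟨⟨y, hy, rfl⟩, by simpa using h⟩

lemma exists_abs_S2_sub_le {P : ℝ[X]} (hP : ¬IsLiouvilleNumber (P.coeff 1)) :
    ∃ K : ℕ, ∀ X z : ℝ, 2 ≤ z → z ^ K ≤ X →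
      |(S2 P X z : ℝ) - X / (π ^ 2 / 6)| ≤ 32 * (X / log z) := by
  obtain ⟨K, hK⟩ := exists_abs_card_AP_sub_le hP
  refine ⟨K, fun X z hz hzX => ?_⟩
  have hX : 0 ≤ X := (by positivity : 0 ≤ z ^ K).trans hzX
  have hlog : 0 < log z := log_pos (by linarith)
  set v := ⌈z⌉₊ - 1 with hv
  set w := Nat.log 4 v
  have hceil : v + 1 = ⌈z⌉₊ := Nat.sub_add_cancel (Nat.one_le_ceil_iff.mpr (by linarith))
  have hvz : (v : ℝ) ≤ z := (Nat.lt_ceil.mp (by omega)).le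
  have hzv : z ≤ (v + 1 : ℕ) := hceil ▸ Nat.le_ceil z
  have hv0 : v ≠ 0 := by
    rintro hv0
    rw [hv0] at hzv
    norm_num at hzv
    linarith
  have hlogw : log z ≤ 2 * (w + 1) := by
    have hz4 : z ≤ 4 ^ (w + 1) :=
      hzv.trans (mod_cast Nat.lt_pow_succ_log_self (by norm_num : 1 < 4) v)
    have hlog4 : log 4 ≤ 2 := by
      rw [show (4 : ℝ) = 2 ^ 2 by norm_num, log_pow]
      push_cast
      linarith [log_two_lt_d9]
    calc log z ≤ log (4 ^ (w + 1)) := log_le_log (by linarith) hz4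
      _ = (w + 1) * log 4 := by rw [log_pow, Nat.cast_add_one]
      _ ≤ 2 * (w + 1) := by rw [mul_comm]; gcongr
  have hsieve := abs_card_coprime_primorial_sub_le hX (Nat.pow_log_le_self 4 hv0) fun d hd => by
    rw [← AP_eq_filter_dvd_gcd P d X]
    rw [mem_Icc] at hd
    exact hK X z hz hzX d hd.1 ((Nat.cast_le.mpr hd.2).trans hvz)
  rw [S2_eq_card_filter_coprime, Pz_eq_primorial, ← hv]
  calc _ ≤ 4 * X / (w + 1) + 2 * v * (12 * X / z ^ 2) := hsieve
    _ ≤ 4 * X / (log z / 2) + 2 * z * (12 * X / z ^ 2) := by gcongr; linarith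
    _ = 8 * (X / log z) + 24 * (X / z) := by field_simp; ring
    _ ≤ 8 * (X / log z) + 24 * (X / log z) := by gcongr; exact log_le_self (by linarith)
    _ = 32 * (X / log z) := by ring

open Filter Asymptotics

lemma log_zf {X : ℝ} (hX : 0 < X) (A : ℝ) :
    log (zf A X) = 1 / (2 * (A + 1)) / log (log X) * log X := by
  rw [zf, log_rpow hX]

lemma tendsto_div_log_atTop : Tendsto (fun x : ℝ => x / log x) atTop atTop := by
  have hpos : ∀ᶠ x : ℝ in atTop, log x / x ∈ Set.Ioi 0 := by
    filter_upwards [eventually_gt_atTop 1] with x hx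
    exact div_pos (log_pos hx) (by linarith)
  have hinv := (tendsto_nhdsWithin_iff.mpr
    ⟨isLittleO_log_id_atTop.tendsto_div_nhds_zero, hpos⟩).inv_tendsto_nhdsGT_zero
  exact hinv.congr fun x => inv_div _ _

lemma tendsto_zf_atTop {A : ℝ} (hA : -1 < A) : Tendsto (zf A) atTop atTop := by
  have hc : 0 < 1 / (2 * (A + 1)) := one_div_pos.mpr (by linarith)
  refine (tendsto_exp_atTop.comp
    ((tendsto_div_log_atTop.comp tendsto_log_atTop).const_mul_atTop hc)).congr' ?_
  filter_upwards [eventually_gt_atTop 0] with X hX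
  rw [Function.comp_apply, Function.comp_apply, zf, rpow_def_of_pos hX]
  congr 1
  ring

lemma log_zf_isLittleO_log (A : ℝ) : (fun X => log (zf A X)) =o[atTop] log := by
  rw [isLittleO_iff_exists_eq_mul]
  refine ⟨fun X => 1 / (2 * (A + 1)) / log (log X),
    (tendsto_log_atTop.comp tendsto_log_atTop).const_div_atTop _, ?_⟩
  filter_upwards [eventually_gt_atTop 0] with X hX using log_zf hX A

lemma eventually_pow_le_of_log_isLittleO_log {z : ℝ → ℝ} (hz : Tendsto z atTop atTop)
    (hzX : (fun X => log (z X)) =o[atTop] log) (K : ℕ) : ∀ᶠ X in atTop, z X ^ K ≤ X := by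
  filter_upwards [(hzX.const_mul_left (K : ℝ)).bound one_pos, hz.eventually_gt_atTop 0,
    eventually_ge_atTop 1] with X hlog hzpos hX
  rw [one_mul, norm_of_nonneg (log_nonneg hX), ← log_pow] at hlog
  exact (log_le_log_iff (pow_pos hzpos K) (by linarith)).mp ((le_abs_self _).trans hlog)

lemma exists_abs_le_of_isBigO_div_log {E F z : ℝ → ℝ} {δ : ℝ} (hz : Tendsto z atTop atTop)
    (hE : E =O[atTop] fun X => X / log (z X)) (hδ : δ ≤ 1) (hF : ∀ᶠ X in atTop, 0 ≤ F X) :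
    ∃ C > (0 : ℝ), ∃ X₀ : ℝ, ∀ X ≥ X₀, |E X| ≤ C * (X / log (z X) ^ δ + F X) := by
  obtain ⟨C, hC, hbound⟩ := hE.exists_pos
  refine ⟨C, hC, eventually_atTop.mp ?_⟩
  filter_upwards [hbound.bound, (tendsto_log_atTop.comp hz).eventually_ge_atTop 1, hF,
    eventually_ge_atTop 0] with X hEX hlog hFX hX
  rw [Function.comp_apply] at hlog
  rw [norm_of_nonneg (by positivity : 0 ≤ X / log (z X))] at hEX
  calc |E X| ≤ C * (X / log (z X)) := hEX
    _ ≤ C * (X / log (z X) ^ δ) := by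
        gcongr
        exact (rpow_le_rpow_of_exponent_le hlog hδ).trans_eq (rpow_one _)
    _ ≤ C * (X / log (z X) ^ δ + F X) := by gcongr; linarith

lemma eventually_div_log_log_rpow_nonneg (r : ℝ) :
    ∀ᶠ X : ℝ in atTop, 0 ≤ X / log (log X) ^ r := by
  filter_upwards [eventually_ge_atTop 0,
    (tendsto_log_atTop.comp tendsto_log_atTop).eventually_ge_atTop 0] with X hX hlog
  exact div_nonneg hX (rpow_nonneg hlog r)

end WeylSieve

open WeylSieve Filter Asymptotics in
theorem statement11_general {P : Polynomial ℝ} (hP : ¬IsLiouvilleNumber (P.coeff 1)) {z : ℝ → ℝ}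
    (hz : Tendsto z atTop atTop) (hzX : (fun X => log (z X)) =o[atTop] log) :
    (fun X => (S2 P X (z X) : ℝ) - X / (π ^ 2 / 6)) =O[atTop] fun X => X / log (z X) := by
  obtain ⟨K, hK⟩ := exists_abs_S2_sub_le hP
  refine IsBigO.of_bound 32 ?_
  filter_upwards [hz.eventually_ge_atTop 2, eventually_pow_le_of_log_isLittleO_log hz hzX K]
    with X hz2 hzK
  exact (hK X (z X) hz2 hzK).trans (by gcongr; exact le_abs_self _)

/-- With `c = 1/(2(A+1))` and `z = X^(c/log log X)`: there are `μ ∈ (0,1)` and `C₁ > 0`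
such that for all sufficiently large `X`,
`|S(X,z) - X/ζ(2)| ≤ C₁·(X/(log z)^(εμ) + X/(log log X)^(1/3))`, where `ζ(2) = π²/6`. -/
theorem statement11 (P : Polynomial ℝ) (hP : ¬ IsLiouvilleNumber (P.coeff 1))
    (ε A : ℝ) (hε : ε ∈ Set.Ioo (0 : ℝ) 1) (hA : 0 < A) :
    ∃ μ : ℝ, μ ∈ Set.Ioo (0 : ℝ) 1 ∧ ∃ C₁ > (0 : ℝ), ∃ X₂ : ℝ, ∀ X : ℝ, X ≥ X₂ →
      |(S2 P X (zf A X) : ℝ) - X / (π ^ 2 / 6)|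
        ≤ C₁ * (X / (Real.log (zf A X)) ^ (ε * μ)
            + X / (Real.log (Real.log X)) ^ ((1 : ℝ) / 3)) := by
  have hz := WeylSieve.tendsto_zf_atTop (by linarith : -1 < A)
  exact ⟨1 / 2, by norm_num, WeylSieve.exists_abs_le_of_isBigO_div_log hz
    (statement11_general hP hz (WeylSieve.log_zf_isLittleO_log A)) (by linarith [hε.2])
    (WeylSieve.eventually_div_log_log_rpow_nonneg _)⟩
end
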